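/- arXiv:1104.0440 — 3 statements merged into one kernel-verified Lean document; each statement's English description precedes it below -/
import Mathlib

section
/- Let T > 0 and let A: ℝ → ℝ be C¹ and T-periodic, with at least one zero in [0,T], with min_{t∈[0,T]} A′(t) > −1/4, and assume all zeros of A are simple (A′(t) ≠ 0 whenever A(t) = 0). Then the normal form equation (NF) has exactly one T-periodic solution with nonconstant sign. -/
/-!
Differentiating `x² / 2` shows that (NF) reads `(x² / 2)' = A + x`, and that a zero of `x` is a zero
of `A`, where the slope `l` of `x` satisfies `l² = A' + l` (`slope_eq_at_zero`). The condition
`A' > -1/4` enters through the curve `x = -2A`: where a solution meets it away from `x = 0`, the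
slope of the solution is `1/2`, which exceeds `-2A'`. Hence `x + 2A` can only change sign upwards
there.

*Uniqueness.* Where a periodic solution with a zero is positive, follow it to its next zero `q`. The
slope at `q` is negative, so `x + 2A < 0` just before `q`, hence also earlier by the barrier, and
therefore `A < 0` (`neg_of_pos`). The symmetry `x ↦ -x(-t)`, `A ↦ -A(-t)` treats negative values.
So `x` vanishes exactly where `A` does and has the opposite sign elsewhere (`sign_of_zeros`). For
two such functions `F = (x² - y²)²` has derivative `4 (x - y)² (x + y)`, of constant sign between
consecutive zeros of `A`, and `F` vanishes at these zeros; so `x = y` (`eq_of_sign`).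

*Existence.* On a component `(a, b)` of `{A > 0}` solve `y' = A - √(2y)`, `y(a) = 0`, and put
`x = -√(2y)`. The right-hand side decreases in `y`, so the solutions of Lipschitz regularisations
converge monotonically to a solution (`exists_sqrt_ode`). The barriers `x = -2A` and `x = -kA` with
`k` small trap it: `k|A| ≤ |x| ≤ 2|A|` (`exists_pos_component`). Components of `{A < 0}` follow by
the symmetry, and the pieces are glued by setting `x = 0` at the zeros of `A`
(`exists_global_branch`). The slope `p = x' = 1 + A / x` is bounded, with `p ≤ 1/2`, and satisfies
`x p' = A' + p - p²`. Since `|x| ≤ C |t - e|` near a zero `e` of `A`, a value of `p` away from the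
smaller root `l` of `l² = A'(e) + l` would drive `p` away at a logarithmically divergent rate; so `p`
tends to `l` from both sides (`Branch.tendsto_slope`) and `x` is differentiable at `e`. Periodicity
follows from `eq_of_sign` applied to `x` and `x(· + T)`.
-/

open Set Filter Topology

namespace AbelNF

/-! ### A monotone differential equation with a square root -/

/-- Nonstrict barrier: a function that starts at most `0` and has nonpositive right derivative
wherever it is nonnegative stays at most `0`. -/
lemma le_zero_of_deriv_nonpos {d d' : ℝ → ℝ} {a b : ℝ} (hc : ContinuousOn d (Icc a b))
    (hd : ∀ t ∈ Ico a b, HasDerivWithinAt d (d' t) (Ici t) t) (ha : d a ≤ 0)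
    (h : ∀ t ∈ Ico a b, 0 ≤ d t → d' t ≤ 0) : ∀ t ∈ Icc a b, d t ≤ 0 := by
  intro t ht
  have key : ∀ μ > 0, d t ≤ μ * (t - a) := by
    intro μ hμ
    refine image_le_of_deriv_right_lt_deriv_boundary' (B := fun s => μ * (s - a))
      (B' := fun _ => μ) hc hd (by simpa using ha) (by fun_prop) ?_ ?_ ht
    · intro s _
      simpa using (((hasDerivAt_id s).sub_const a).const_mul μ).hasDerivWithinAt
    · intro s hs he
      have : 0 ≤ d s := by rw [he]; exact mul_nonneg hμ.le (by linarith [hs.1])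
      linarith [h s hs this]
  have hlim : Tendsto (fun μ : ℝ => μ * (t - a)) (𝓝[>] 0) (𝓝 0) := by
    have : Tendsto (fun μ : ℝ => μ * (t - a)) (𝓝 0) (𝓝 (0 * (t - a))) :=
      (continuous_id.mul continuous_const).tendsto 0
    rw [zero_mul] at this
    exact this.mono_left nhdsWithin_le_nhds
  exact ge_of_tendsto hlim (eventually_nhdsWithin_of_forall key)

/-- Picard–Lindelöf on a whole interval for `y' = A t - ψ y`: boundedness of `ψ` allows a ball so
large that the solution cannot leave it before time `b`. -/
lemma exists_picard {A ψ : ℝ → ℝ} (hA : Continuous A) {K : NNReal} (hψ : LipschitzWith K ψ)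
    {M : ℝ} (hM : ∀ y, |ψ y| ≤ M) {a b : ℝ} (hab : a < b) :
    ∃ y : ℝ → ℝ, y a = 0 ∧
      ∀ t ∈ Icc a b, HasDerivWithinAt y (A t - ψ (y t)) (Icc a b) t := by
  obtain ⟨C, hC⟩ := isCompact_Icc.exists_bound_of_continuousOn (hA.continuousOn (s := Icc a b))
  have hC0 : 0 ≤ C := (norm_nonneg _).trans (hC a ⟨le_rfl, hab.le⟩)
  have hM0 : 0 ≤ M := (abs_nonneg _).trans (hM 0)
  have hP : IsPicardLindelof (fun t y => A t - ψ y) (tmin := a) (tmax := b)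
      ⟨a, le_rfl, hab.le⟩ 0 (Real.toNNReal ((C + M) * (b - a))) 0 (Real.toNNReal (C + M)) K := by
    refine ⟨fun t _ => ?_, fun x _ => by fun_prop, fun t ht x _ => ?_, ?_⟩
    · refine (LipschitzWith.of_dist_le_mul fun x y => ?_).lipschitzOnWith
      have := hψ.dist_le_mul x y
      rw [Real.dist_eq] at this ⊢
      rwa [show A t - ψ x - (A t - ψ y) = -(ψ x - ψ y) by ring, abs_neg]
    · rw [Real.coe_toNNReal _ (by positivity)]
      exact (norm_sub_le _ _).trans (add_le_add (hC t ht) (hM x))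
    · have : 0 ≤ b - a := by linarith
      rw [Real.coe_toNNReal _ (by positivity), Real.coe_toNNReal _ (by positivity)]
      simp [this]
  exact hP.exists_eq_forall_mem_Icc_hasDerivWithinAt₀

lemma sqrt_lipschitz {δ : ℝ} (hδ : 0 < δ) (M : ℝ) :
    LipschitzWith (Real.toNNReal (1 / √δ)) (fun y : ℝ => min (√(2 * max y 0 + δ)) M) := by
  refine LipschitzWith.min_const (LipschitzWith.of_dist_le_mul fun y z => ?_) M
  have hsd : 0 < √δ := Real.sqrt_pos.2 hδ
  rw [Real.coe_toNNReal _ (by positivity), Real.dist_eq, Real.dist_eq]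
  have hy : 0 ≤ 2 * max y 0 := by positivity
  have hz : 0 ≤ 2 * max z 0 := by positivity
  have h1 : √δ ≤ √(2 * max y 0 + δ) := Real.sqrt_le_sqrt (by linarith)
  have h2 : √δ ≤ √(2 * max z 0 + δ) := Real.sqrt_le_sqrt (by linarith)
  have h3 : |√(2 * max y 0 + δ) - √(2 * max z 0 + δ)| *
      (√(2 * max y 0 + δ) + √(2 * max z 0 + δ)) = 2 * |max y 0 - max z 0| := by
    rw [← abs_of_nonneg (show 0 ≤ √(2 * max y 0 + δ) + √(2 * max z 0 + δ) by positivity),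
      ← abs_mul]
    rw [show (√(2 * max y 0 + δ) - √(2 * max z 0 + δ)) * (√(2 * max y 0 + δ) + √(2 * max z 0 + δ))
      = √(2 * max y 0 + δ) ^ 2 - √(2 * max z 0 + δ) ^ 2 by ring, Real.sq_sqrt (by linarith),
      Real.sq_sqrt (by linarith), show 2 * max y 0 + δ - (2 * max z 0 + δ)
        = 2 * (max y 0 - max z 0) by ring, abs_mul]
    norm_num
  have h4 : |max y 0 - max z 0| ≤ |y - z| := abs_max_sub_max_le_abs y z 0
  rw [div_mul_eq_mul_div, le_div_iff₀ hsd]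
  nlinarith [abs_nonneg (√(2 * max y 0 + δ) - √(2 * max z 0 + δ))]

/-- The Cauchy problem `y' = A - min (√(2 y⁺)) M`, `y a = 0`. The right-hand side is not Lipschitz
at `y = 0`, but it is antitone in `y`; the solutions of the problems with `√(2 y⁺ + δ)` therefore
increase as `δ` decreases to `0`, and their limit solves the integrated equation. The cap `M`
keeps the right-hand side bounded. -/
lemma exists_sqrt_ode {A : ℝ → ℝ} (hA : Continuous A) {M : ℝ} (hM : 0 ≤ M) {a b : ℝ}
    (hab : a < b) : ∃ y : ℝ → ℝ, y a = 0 ∧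
      ∀ t ∈ Icc a b, HasDerivAt y (A t - min (√(2 * max (y t) 0)) M) t := by
  set δ : ℕ → ℝ := fun n => 1 / ((n : ℝ) + 1) with hδ
  have hδpos : ∀ n, 0 < δ n := fun n => by simp only [hδ]; positivity
  have hδlim : Tendsto δ atTop (𝓝 0) := tendsto_one_div_add_atTop_nhds_zero_nat
  have hδanti : Antitone δ := fun m n h => by
    simp only [hδ]
    gcongr
  set ψ : ℝ → ℝ → ℝ := fun d y => min (√(2 * max y 0 + d)) M with hψ
  have hψc : Continuous (fun p : ℝ × ℝ => ψ p.1 p.2) := by simp only [hψ]; fun_prop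
  have hψ0 : ∀ d y, 0 ≤ ψ d y := fun d y => le_min (Real.sqrt_nonneg _) hM
  have hψM : ∀ d y, |ψ d y| ≤ M := fun d y => by
    rw [abs_of_nonneg (hψ0 d y)]; exact min_le_right _ _
  have hψmono : ∀ d e y z, d ≤ e → y ≤ z → ψ d y ≤ ψ e z := fun d e y z h1 h2 => by
    simp only [hψ]; gcongr
  choose y hy0 hy using fun n => exists_picard hA (sqrt_lipschitz (hδpos n) M) (hψM (δ n)) hab
  change ∀ n, ∀ t ∈ Icc a b, HasDerivWithinAt (y n) (A t - ψ (δ n) (y n t)) (Icc a b) t at hy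
  have hyc : ∀ n, ContinuousOn (y n) (Icc a b) := fun n t ht => (hy n t ht).continuousWithinAt
  have hyr : ∀ n, ∀ t ∈ Ico a b,
      HasDerivWithinAt (y n) (A t - ψ (δ n) (y n t)) (Ici t) t := fun n t ht =>
    (hy n t ⟨ht.1, ht.2.le⟩).mono_of_mem_nhdsWithin
      (mem_of_superset (Icc_mem_nhdsGE ht.2) (Icc_subset_Icc_left ht.1))
  have hmono : ∀ t ∈ Icc a b, Monotone (fun n => y n t) := by
    intro t ht m n hmn
    have := le_zero_of_deriv_nonpos (d := fun s => y m s - y n s) ((hyc m).sub (hyc n))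
      (fun s hs => (hyr m s hs).sub (hyr n s hs)) (by simp [hy0]) (fun s hs h => by
        have := hψmono _ _ _ _ (hδanti hmn) (sub_nonneg.1 h)
        linarith) t ht
    simpa using this
  obtain ⟨C, hC⟩ := isCompact_Icc.exists_bound_of_continuousOn (hA.continuousOn (s := Icc a b))
  have hder : ∀ n, ∀ t ∈ Icc a b, ‖A t - ψ (δ n) (y n t)‖ ≤ C + M := fun n t ht =>
    (norm_sub_le _ _).trans (add_le_add (hC t ht) (hψM _ _))
  have hlip : ∀ n, ∀ s ∈ Icc a b, ∀ t ∈ Icc a b, |y n t - y n s| ≤ (C + M) * |t - s| :=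
    fun n s hs t ht => (convex_Icc a b).norm_image_sub_le_of_norm_hasDerivWithin_le
      (hy n) (hder n) hs ht
  have hbdd : ∀ t ∈ Icc a b, BddAbove (range fun n => y n t) := by
    rintro t ht
    refine ⟨(C + M) * |t - a|, ?_⟩
    rintro _ ⟨n, rfl⟩
    have := hlip n a ⟨le_rfl, hab.le⟩ t ht
    rw [hy0, sub_zero] at this
    exact (le_abs_self _).trans this
  set z : ℝ → ℝ := fun t => ⨆ n, y n t with hz
  have hlim : ∀ t ∈ Icc a b, Tendsto (fun n => y n t) atTop (𝓝 (z t)) := fun t ht =>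
    tendsto_atTop_ciSup (hmono t ht) (hbdd t ht)
  have hzlip : ∀ s ∈ Icc a b, ∀ t ∈ Icc a b, |z t - z s| ≤ (C + M) * |t - s| :=
    fun s hs t ht => le_of_tendsto ((hlim t ht).sub (hlim s hs)).abs
      (Eventually.of_forall fun n => hlip n s hs t ht)
  have hCM : 0 ≤ C + M := (norm_nonneg _).trans (hder 0 a ⟨le_rfl, hab.le⟩)
  have hzc : ContinuousOn z (Icc a b) := by
    refine (LipschitzOnWith.of_dist_le_mul (K := Real.toNNReal (C + M)) fun s hs t ht => ?_).continuousOn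
    rw [Real.coe_toNNReal _ hCM]
    exact hzlip t ht s hs
  -- Extending the limit beyond `[a, b]` makes the primitive below differentiable at the endpoints.
  set w : ℝ → ℝ := IccExtend hab.le ((Icc a b).domRestrict z) with hw
  have hwc : Continuous w := (continuousOn_iff_continuous_domRestrict.1 hzc).Icc_extend'
  have hwz : ∀ t ∈ Icc a b, w t = z t := fun t ht => by
    rw [hw, IccExtend_of_mem _ _ ht]; rfl
  have hgc : Continuous fun t => A t - ψ 0 (w t) :=
    hA.sub (hψc.comp (continuous_const.prodMk hwc))
  have hint : ∀ t ∈ Icc a b, z t = ∫ s in a..t, (A s - ψ 0 (w s)) := by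
    intro t ht
    have hsub : Icc a t ⊆ Icc a b := Icc_subset_Icc_right ht.2
    have hfc : ∀ n, ContinuousOn (fun s => A s - ψ (δ n) (y n s)) (Icc a b) := fun n =>
      hA.continuousOn.sub (hψc.comp_continuousOn (continuousOn_const.prodMk (hyc n)))
    have h1 : ∀ n, ∫ s in a..t, (A s - ψ (δ n) (y n s)) = y n t := by
      intro n
      rw [intervalIntegral.integral_eq_sub_of_hasDeriv_right_of_le ht.1 ((hyc n).mono hsub)
        (fun s hs => (hyr n s ⟨hs.1.le, hs.2.trans_le ht.2⟩).mono Ioi_subset_Ici_self)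
        (((hfc n).mono hsub).intervalIntegrable_of_Icc ht.1), hy0, sub_zero]
    refine tendsto_nhds_unique (hlim t ht) ?_
    simp_rw [← h1]
    have hio : ∀ s, s ∈ uIoc a t → s ∈ Icc a b := fun s hs => by
      rw [uIoc_of_le ht.1] at hs; exact hsub ⟨hs.1.le, hs.2⟩
    refine intervalIntegral.tendsto_integral_filter_of_dominated_convergence (fun _ => C + M)
      (Eventually.of_forall fun n => ?_) (Eventually.of_forall fun n => ?_)
      (by simp) ?_
    · exact ((hfc n).mono hio).aestronglyMeasurable measurableSet_uIoc
    · exact Eventually.of_forall fun s hs => hder n s (hio s hs)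
    · refine Eventually.of_forall fun s hs => tendsto_const_nhds.sub ?_
      rw [hwz s (hio s hs)]
      exact (hψc.tendsto (0, z s)).comp (hδlim.prodMk_nhds (hlim s (hio s hs)))
  refine ⟨fun t => ∫ s in a..t, (A s - ψ 0 (w s)), by simp, fun t ht => ?_⟩
  refine (hgc.integral_hasStrictDerivAt a t).hasDerivAt.congr_deriv ?_
  simp only [← hint t ht, hwz t ht]
  simp only [hψ, add_zero]

/-! ### Solutions between two zeros of `A` -/

/-- At time `t`, the function `x` solves `x x' = A + x` with `x t ≠ 0`, has sign opposite to `A`, and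
lies between the barriers `-k A` and `-2 A`. -/
def Branch (A : ℝ → ℝ) (k : ℝ) (x : ℝ → ℝ) (t : ℝ) : Prop :=
  HasDerivAt x (1 + A t / x t) t ∧ A t * x t < 0 ∧ k * |A t| ≤ |x t| ∧ |x t| ≤ 2 * |A t|

lemma Branch.congr {A : ℝ → ℝ} {k : ℝ} {x y : ℝ → ℝ} {t : ℝ} (h : Branch A k x t)
    (hxy : y =ᶠ[𝓝 t] x) : Branch A k y t := by
  unfold Branch
  rw [hxy.eq_of_nhds]
  exact ⟨h.1.congr_of_eventuallyEq hxy, h.2⟩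

/-- The time reversal `x ↦ -x(-t)`, `A ↦ -A(-t)` preserves (NF) and the barriers. -/
lemma Branch.reflect {A : ℝ → ℝ} {k : ℝ} {x : ℝ → ℝ} {t : ℝ} (h : Branch A k x (-t)) :
    Branch (fun s => -A (-s)) k (fun s => -x (-s)) t := by
  obtain ⟨h1, h2, h3, h4⟩ := h
  refine ⟨?_, by simpa using h2, by simpa using h3, by simpa using h4⟩
  refine ((h1.comp t (hasDerivAt_neg t)).neg).congr_deriv ?_
  simp [neg_div_neg_eq]

lemma deriv_reflect (A : ℝ → ℝ) (t : ℝ) : deriv (fun s => -A (-s)) t = deriv A (-t) := by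
  rw [deriv.fun_neg, deriv_comp_neg, neg_neg]

/-- On a component of `{A > 0}` the solution of `y' = A - √(2y)`, `y a = 0`, satisfies
`k² A² / 2 ≤ y ≤ 2 A²`, and `x = -√(2y)` solves (NF). The upper bound uses `A' > -1/4`. -/
lemma exists_pos_component {A : ℝ → ℝ} (hA : ContDiff ℝ 1 A) {k : ℝ} (hk0 : 0 < k)
    (hk : ∀ t, k ^ 2 * deriv A t ≤ 1 - k) (hA4 : ∀ t, -(1 / 4) < deriv A t) {a b : ℝ}
    (hab : a < b) (ha : A a = 0) (hpos : ∀ t ∈ Ioo a b, 0 < A t) :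
    ∃ x : ℝ → ℝ, ∀ t ∈ Ioo a b, Branch A k x t := by
  have hAd : ∀ t, HasDerivAt A (deriv A t) t := fun t =>
    (hA.differentiable (by norm_num) t).hasDerivAt
  obtain ⟨C, hC⟩ := isCompact_Icc.exists_bound_of_continuousOn
    (hA.continuous.continuousOn (s := Icc a b))
  have hC0 : 0 ≤ C := (norm_nonneg _).trans (hC a ⟨le_rfl, hab.le⟩)
  obtain ⟨y, hy0, hy⟩ := exists_sqrt_ode hA.continuous (M := 2 * C) (by positivity) hab
  have hyc : ContinuousOn y (Icc a b) := fun t ht => (hy t ht).continuousAt.continuousWithinAt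
  have hnn : ∀ t ∈ Ico a b, 0 ≤ A t := fun t ht => by
    rcases eq_or_lt_of_le ht.1 with h | h
    · rw [← h, ha]
    · exact (hpos t ⟨h, ht.2⟩).le
  have hlow : ∀ t ∈ Icc a b, k ^ 2 * A t ^ 2 / 2 - y t ≤ 0 := by
    refine le_zero_of_deriv_nonpos (by have := hA.continuous; fun_prop)
      (fun t ht => (((((hAd t).pow 2).const_mul (k ^ 2)).div_const 2).sub
        (hy t ⟨ht.1, ht.2.le⟩)).hasDerivWithinAt) (by simp [ha, hy0]) ?_
    intro t ht h
    have hA0 := hnn t ht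
    have h1 : √(2 * max (y t) 0) ≤ k * A t := by
      rw [Real.sqrt_le_left (by positivity)]
      have : max (y t) 0 ≤ k ^ 2 * A t ^ 2 / 2 := max_le (by linarith) (by positivity)
      nlinarith
    have h2 := (min_le_left (√(2 * max (y t) 0)) (2 * C)).trans h1
    have h3 := mul_le_mul_of_nonneg_left (hk t) hA0
    generalize min (√(2 * max (y t) 0)) (2 * C) = m at h2 ⊢
    norm_num
    nlinarith
  -- At a point with `y ≥ 2 A²` one has `y' ≤ A - 2 A = -A ≤ 4 A A'`, because `A' > -1/4`.
  have hupp : ∀ t ∈ Icc a b, y t - 2 * A t ^ 2 ≤ 0 := by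
    refine le_zero_of_deriv_nonpos (by have := hA.continuous; fun_prop)
      (fun t ht => ((hy t ⟨ht.1, ht.2.le⟩).sub
        (((hAd t).pow 2).const_mul 2)).hasDerivWithinAt) (by simp [ha, hy0]) ?_
    intro t ht h
    have hA0 := hnn t ht
    have h1 : 2 * A t ≤ √(2 * max (y t) 0) := by
      apply Real.le_sqrt_of_sq_le
      have : y t ≤ max (y t) 0 := le_max_left _ _
      nlinarith
    have h2 : 2 * A t ≤ 2 * C := by
      have := hC t ⟨ht.1, ht.2.le⟩
      rw [Real.norm_eq_abs] at this
      linarith [le_abs_self (A t)]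
    have h3 := le_min h1 h2
    have h4 := mul_le_mul_of_nonneg_left (hA4 t).le hA0
    generalize min (√(2 * max (y t) 0)) (2 * C) = m at h3 ⊢
    norm_num
    nlinarith
  refine ⟨fun t => -√(2 * y t), fun t ht => ?_⟩
  have ht' : t ∈ Icc a b := ⟨ht.1.le, ht.2.le⟩
  have hA0 := hpos t ht
  have h1 := hlow t ht'
  have h2 := hupp t ht'
  have hypos : 0 < y t := by nlinarith [show 0 < k ^ 2 * A t ^ 2 by positivity]
  have hs : 0 < √(2 * y t) := by positivity
  have hle : √(2 * y t) ≤ 2 * A t := by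
    rw [Real.sqrt_le_left (by positivity)]; nlinarith
  have hge : k * A t ≤ √(2 * y t) := by
    apply Real.le_sqrt_of_sq_le; nlinarith
  refine ⟨?_, by nlinarith, ?_, ?_⟩
  · have hd := hy t ht'
    have hm : min (√(2 * max (y t) 0)) (2 * C) = √(2 * y t) := by
      rw [max_eq_left hypos.le, min_eq_left]
      have := hC t ht'
      rw [Real.norm_eq_abs] at this
      linarith [le_abs_self (A t)]
    rw [hm] at hd
    refine ((hd.const_mul 2).sqrt (by positivity)).neg.congr_deriv ?_
    field_simp
    ring
  · rw [abs_neg, abs_of_pos hs, abs_of_pos hA0]; exact hge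
  · rw [abs_neg, abs_of_pos hs, abs_of_pos hA0]; exact hle

lemma sign_component {A : ℝ → ℝ} (hA : Continuous A) {a b : ℝ}
    (hne : ∀ t ∈ Ioo a b, A t ≠ 0) : (∀ t ∈ Ioo a b, 0 < A t) ∨ (∀ t ∈ Ioo a b, A t < 0) := by
  by_contra! hcon
  obtain ⟨⟨s, hs, hs0⟩, t, ht, ht0⟩ := hcon
  obtain ⟨c, hc, hc0⟩ := isPreconnected_Ioo.intermediate_value hs ht hA.continuousOn
    (show (0 : ℝ) ∈ Icc (A s) (A t) from ⟨hs0, ht0⟩)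
  exact hne c hc hc0

lemma exists_component {A : ℝ → ℝ} (hA : ContDiff ℝ 1 A) {k : ℝ} (hk0 : 0 < k)
    (hk : ∀ t, k ^ 2 * deriv A t ≤ 1 - k) (hA4 : ∀ t, -(1 / 4) < deriv A t) {a b : ℝ}
    (hab : a < b) (ha : A a = 0) (hb : A b = 0) (hne : ∀ t ∈ Ioo a b, A t ≠ 0) :
    ∃ x : ℝ → ℝ, ∀ t ∈ Ioo a b, Branch A k x t := by
  rcases sign_component hA.continuous hne with hpos | hneg
  · exact exists_pos_component hA hk0 hk hA4 hab ha hpos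
  · have hB : ContDiff ℝ 1 (fun s => -A (-s)) := (hA.comp contDiff_neg).neg
    obtain ⟨x, hx⟩ := exists_pos_component hB hk0 (fun t => by rw [deriv_reflect]; exact hk _)
      (fun t => by rw [deriv_reflect]; exact hA4 _) (neg_lt_neg hab) (by simp [hb])
      (fun t ht => neg_pos.2 (hneg (-t) ⟨by linarith [ht.2], by linarith [ht.1]⟩))
    refine ⟨fun s => -x (-s), fun t ht => ?_⟩
    have := (hx (-t) ⟨by linarith [ht.2], by linarith [ht.1]⟩).reflect
    simpa using this

/-! ### Differentiability at the zeros of `A` -/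

/-- If a function `E`, bounded above to the right of `e`, moves monotonically at rate at least
`κ / (t - e)` whenever `E ≥ η`, then `E ≤ η` close to `e`: the rate is not integrable at `e`, so
otherwise `E` would exceed its bound. Both directions of motion are allowed; they correspond to
the zeros of `A` with negative and with positive derivative. -/
lemma eventually_le_of_log {E E' : ℝ → ℝ} {e r K η κ : ℝ} (hr : e < r) (hκ : 0 < κ)
    (hE : ∀ t ∈ Ioo e r, HasDerivAt E (E' t) t) (hK : ∀ t ∈ Ioo e r, E t ≤ K)
    (h : (∀ t ∈ Ioo e r, η ≤ E t → κ / (t - e) ≤ E' t) ∨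
      (∀ t ∈ Ioo e r, η ≤ E t → E' t ≤ -(κ / (t - e)))) :
    ∀ᶠ t in 𝓝[>] e, E t ≤ η := by
  have hlog : Tendsto (fun t => Real.log (t - e)) (𝓝[>] e) atBot := by
    refine Real.tendsto_log_nhdsGT_zero.comp ?_
    refine tendsto_nhdsWithin_iff.2 ⟨?_, eventually_nhdsWithin_of_forall fun t ht =>
      mem_Ioi.2 (sub_pos.2 ht)⟩
    have : Tendsto (fun t => t - e) (𝓝 e) (𝓝 (e - e)) := (continuous_sub_right e).tendsto e
    rw [sub_self] at this
    exact this.mono_left nhdsWithin_le_nhds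
  have hlogd : ∀ t, e < t → HasDerivAt (fun t => Real.log (t - e)) (1 / (t - e)) t :=
    fun t ht => ((hasDerivAt_id t).sub_const e).log (sub_pos.2 ht).ne'
  have hlogc : ∀ s t, e < s → ContinuousOn (fun t => Real.log (t - e)) (Icc s t) :=
    fun s t hs u hu => (hlogd u (hs.trans_le hu.1)).continuousAt.continuousWithinAt
  have hlogm : ∀ s t, e < s → s ≤ t → Real.log (s - e) ≤ Real.log (t - e) := fun s t hs hst =>
    Real.log_le_log (sub_pos.2 hs) (by linarith)
  rcases h with h | h
  · set t2 := (e + r) / 2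
    have ht2 : e < t2 ∧ t2 < r := ⟨by simp only [t2]; linarith, by simp only [t2]; linarith⟩
    filter_upwards [hlog.eventually_lt_atBot (Real.log (t2 - e) - 2 * (K - η) / κ),
      Ioo_mem_nhdsGT ht2.1] with t1 hl ht1
    by_contra hcon
    push Not at hcon
    have hmem : ∀ s ∈ Icc t1 t2, s ∈ Ioo e r := fun s hs =>
      ⟨ht1.1.trans_le hs.1, hs.2.trans_lt ht2.2⟩
    have key := image_le_of_deriv_right_lt_deriv_boundary'
      (f := fun t => η + κ / 2 * (Real.log (t - e) - Real.log (t1 - e)))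
      (f' := fun t => κ / 2 * (1 / (t - e))) (a := t1) (b := t2) (B := E) (B' := E')
      (continuousOn_const.add (continuousOn_const.mul ((hlogc _ _ ht1.1).sub continuousOn_const)))
      (fun s hs => ((((hlogd s (ht1.1.trans_le hs.1)).sub_const _).const_mul _).const_add
        _).hasDerivWithinAt) (by simpa using hcon.le)
      (fun s hs => (hE s (hmem s hs)).continuousAt.continuousWithinAt)
      (fun s hs => (hE s (hmem s ⟨hs.1, hs.2.le⟩)).hasDerivWithinAt)
      (fun s hs heq => by
        have hs0 : 0 < s - e := sub_pos.2 (ht1.1.trans_le hs.1)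
        have h1 := h s (hmem s ⟨hs.1, hs.2.le⟩) (by
          rw [← heq]
          have := hlogm _ _ ht1.1 hs.1
          nlinarith)
        refine lt_of_lt_of_le ?_ h1
        have : 0 < κ / (s - e) := by positivity
        rw [show κ / 2 * (1 / (s - e)) = κ / (s - e) / 2 by ring]
        linarith) (x := t2) ⟨ht1.2.le, le_rfl⟩
    have h2 := hK t2 ht2
    have h3 : 2 * (K - η) / κ < Real.log (t2 - e) - Real.log (t1 - e) := by linarith
    rw [div_lt_iff₀ hκ] at h3
    linarith
  · filter_upwards [Ioo_mem_nhdsGT hr] with t1 ht1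
    obtain ⟨t0, hl, ht0⟩ := ((hlog.eventually_lt_atBot
      (Real.log (t1 - e) - 2 * (K - η) / κ)).and (Ioo_mem_nhdsGT ht1.1)).exists
    have hmem : ∀ s ∈ Icc t0 t1, s ∈ Ioo e r := fun s hs =>
      ⟨ht0.1.trans_le hs.1, hs.2.trans_lt ht1.2⟩
    have h3 : 2 * (K - η) / κ < Real.log (t1 - e) - Real.log (t0 - e) := by linarith
    rw [div_lt_iff₀ hκ] at h3
    have hK0 := hK t0 (hmem t0 ⟨le_rfl, ht0.2.le⟩)
    have key := image_le_of_deriv_right_lt_deriv_boundary'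
      (B := fun t => η - κ / 2 * (Real.log (t - e) - Real.log (t1 - e)))
      (B' := fun t => -(κ / 2 * (1 / (t - e)))) (a := t0) (b := t1) (f := E) (f' := E')
      (fun s hs => (hE s (hmem s hs)).continuousAt.continuousWithinAt)
      (fun s hs => (hE s (hmem s ⟨hs.1, hs.2.le⟩)).hasDerivWithinAt) (by linarith)
      (continuousOn_const.sub (continuousOn_const.mul ((hlogc _ _ ht0.1).sub continuousOn_const)))
      (fun s hs => ((((hlogd s (ht0.1.trans_le hs.1)).sub_const _).const_mul _).const_sub
        _).hasDerivWithinAt)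
      (fun s hs heq => by
        have hs0 : 0 < s - e := sub_pos.2 (ht0.1.trans_le hs.1)
        have h1 := h s (hmem s ⟨hs.1, hs.2.le⟩) (by
          rw [heq]
          have := hlogm _ _ (ht0.1.trans_le hs.1) hs.2.le
          nlinarith)
        refine lt_of_le_of_lt h1 ?_
        have : 0 < κ / (s - e) := by positivity
        rw [show κ / 2 * (1 / (s - e)) = κ / (s - e) / 2 by ring]
        linarith) (x := t1) ⟨ht0.2.le, le_rfl⟩
    simpa using key

/-- The slope `1 + A / x` of a branch lies between `1 - 1 / k` and `1 / 2`. -/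
lemma Branch.ratio_bounds {A : ℝ → ℝ} {k : ℝ} (hk : 0 < k) {x : ℝ → ℝ} {t : ℝ}
    (h : Branch A k x t) : -(1 / k) ≤ A t / x t ∧ A t / x t ≤ -(1 / 2) := by
  obtain ⟨-, h2, h3, h4⟩ := h
  have hx : x t ≠ 0 := right_ne_zero_of_mul h2.ne
  have hneg : A t / x t < 0 := by
    rw [show A t / x t = A t * x t / (x t) ^ 2 by field_simp]
    exact div_neg_of_neg_of_pos h2 (by positivity)
  have habs : -(A t / x t) = |A t| / |x t| := by rw [← abs_div, abs_of_neg hneg]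
  have hx' : 0 < |x t| := abs_pos.2 hx
  constructor
  · have : |A t| / |x t| ≤ 1 / k := by
      rw [div_le_div_iff₀ hx' hk]; linarith
    linarith
  · have : 1 / 2 ≤ |A t| / |x t| := by
      rw [div_le_div_iff₀ two_pos hx']; linarith
    linarith

/-- To the right of a simple zero `e` of `A`, the slope `p = 1 + A / x` of a branch tends to the
smaller root `l` of `l² = A'(e) + l`. The proof applies `eventually_le_of_log` to `(p - l)²`, using
`x p' = A' + p - p²` and `p ≤ 1 / 2`, which keeps `p` away from the larger root. -/
lemma Branch.tendsto_slope {A : ℝ → ℝ} (hA : ContDiff ℝ 1 A) {k : ℝ} (hk : 0 < k) {e : ℝ}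
    (he : A e = 0) (hα : deriv A e ≠ 0) (hα4 : -(1 / 4) < deriv A e) {x : ℝ → ℝ}
    (hx : ∀ᶠ t in 𝓝[>] e, Branch A k x t) :
    Tendsto (fun t => 1 + A t / x t) (𝓝[>] e) (𝓝 ((1 - √(1 + 4 * deriv A e)) / 2)) := by
  have hAd : ∀ t, HasDerivAt A (deriv A t) t := fun t =>
    (hA.differentiable (by norm_num) t).hasDerivAt
  set α := deriv A e with hαdef
  set S := √(1 + 4 * α) with hS
  have hS0 : 0 < S := Real.sqrt_pos.2 (by linarith)
  have hS2 : S ^ 2 = 1 + 4 * α := Real.sq_sqrt (by linarith)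
  set l := (1 - S) / 2 with hl
  have hll : l ^ 2 - l = α := by rw [hl]; nlinarith
  rw [Metric.tendsto_nhds]
  intro ε' hε'
  set ε := ε' / 2 with hεdef
  have hε : 0 < ε := by positivity
  -- `|x| ≤ 2 |A| ≤ C (t - e)` near `e`
  set C := 2 * (|α| + 1) with hC
  have hC0 : 0 < C := by positivity
  have hAC : ∀ᶠ t in 𝓝[>] e, 2 * |A t| ≤ C * (t - e) := by
    have h1 := (hasDerivAt_iff_tendsto_slope.1 (hAd e)).mono_left
      (nhdsWithin_mono e (fun t (ht : e < t) => ht.ne'))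
    have h2 := h1.abs.eventually (gt_mem_nhds (show |deriv A e| < |α| + 1 by
      rw [← hαdef]; linarith))
    filter_upwards [h2, self_mem_nhdsWithin] with t ht hte
    have h0 : 0 < t - e := sub_pos.2 hte
    rw [slope_def_field, he, sub_zero, abs_div, abs_of_pos h0, div_lt_iff₀ h0] at ht
    rw [hC]; linarith
  have hAα : ∀ᶠ t in 𝓝[>] e, |deriv A t - α| < ε * S / 4 := by
    have : Tendsto (deriv A) (𝓝[>] e) (𝓝 α) :=
      ((hA.continuous_deriv (by norm_num)).tendsto e).mono_left nhdsWithin_le_nhds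
    have := (Metric.tendsto_nhds.1 this) (ε * S / 4) (by positivity)
    simpa [Real.dist_eq] using this
  have hsgn : (0 < α ∧ ∀ᶠ t in 𝓝[>] e, 0 < A t) ∨ (α < 0 ∧ ∀ᶠ t in 𝓝[>] e, A t < 0) := by
    have h1 := (hasDerivAt_iff_tendsto_slope.1 (hAd e)).mono_left
      (nhdsWithin_mono e (fun t (ht : e < t) => ht.ne'))
    rcases lt_or_gt_of_ne hα with h | h
    · refine Or.inr ⟨h, ?_⟩
      filter_upwards [h1.eventually (gt_mem_nhds h), self_mem_nhdsWithin] with t ht hte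
      have h0 : 0 < t - e := sub_pos.2 hte
      rw [slope_def_field, he, sub_zero, div_lt_iff₀ h0] at ht
      linarith
    · refine Or.inl ⟨h, ?_⟩
      filter_upwards [h1.eventually (lt_mem_nhds h), self_mem_nhdsWithin] with t ht hte
      have h0 : 0 < t - e := sub_pos.2 hte
      rw [slope_def_field, he, sub_zero, lt_div_iff₀ h0] at ht
      linarith
  have hpd : ∀ t, Branch A k x t → HasDerivAt (fun t => (1 + A t / x t - l) ^ 2)
      (2 * (1 + A t / x t - l) *
        ((deriv A t + (1 + A t / x t) - (1 + A t / x t) ^ 2) / x t)) t := by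
    intro t ht
    have hx0 : x t ≠ 0 := right_ne_zero_of_mul ht.2.1.ne
    refine (((((hAd t).div ht.1 hx0).const_add 1).sub_const l).pow 2).congr_deriv ?_
    simp only [Nat.cast_ofNat, Nat.add_one_sub_one, pow_one, Pi.div_apply]
    congr 1
    field_simp
    ring
  -- With `D = p - l`: `A' + p - p² = (A' - α) + D (S - D)` and `D ≤ S / 2`, so `D` and
  -- `A' + p - p²` have the same sign once `|D| ≥ ε` and `A'` is close to `α`.
  have hpos : ∀ t, Branch A k x t → |deriv A t - α| < ε * S / 4 →
      ε ^ 2 ≤ (1 + A t / x t - l) ^ 2 → ε ^ 2 * S / 4 ≤ (1 + A t / x t - l) *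
        (deriv A t + (1 + A t / x t) - (1 + A t / x t) ^ 2) := by
    intro t ht h1 h2
    have hb := (ht.ratio_bounds hk).2
    set D := 1 + A t / x t - l with hD
    have hp : 1 + A t / x t = D + l := by rw [hD]; ring
    have hDS : D ≤ S / 2 := by rw [hD, hl]; linarith
    rw [hp, show deriv A t + (D + l) - (D + l) ^ 2 = (deriv A t - α) + D * (S - D) by
      rw [← hll, hl]; ring]
    have habs : ε ≤ |D| := by
      have := sq_le_sq.1 h2
      rwa [abs_of_pos hε] at this
    have h3 : -(|D| * (ε * S / 4)) ≤ D * (deriv A t - α) := by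
      have := neg_abs_le (D * (deriv A t - α))
      rw [abs_mul] at this
      nlinarith [abs_nonneg D]
    have h4 : |D| ^ 2 = D ^ 2 := sq_abs D
    have h5 : 0 ≤ D ^ 2 * (S / 2 - D) := mul_nonneg (sq_nonneg D) (by linarith)
    have h6 : |D| * (ε * S / 4) ≤ D ^ 2 * S / 4 := by
      rw [← h4]; nlinarith [mul_nonneg (abs_nonneg D) hS0.le]
    have h7 : ε ^ 2 * S / 4 ≤ D ^ 2 * S / 4 := by nlinarith
    nlinarith
  have hmain : ∀ᶠ t in 𝓝[>] e, (1 + A t / x t - l) ^ 2 ≤ ε ^ 2 := by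
    obtain ⟨r, hr, hrs⟩ := mem_nhdsGT_iff_exists_Ioo_subset.1 (hx.and (hAC.and hAα))
    set κ := 2 * (ε ^ 2 * S / 4) / C with hκ
    have hκ0 : 0 < κ := by positivity
    have hK : ∀ t ∈ Ioo e r, (1 + A t / x t - l) ^ 2 ≤ (1 + 1 / k + |l|) ^ 2 := by
      intro t ht
      have hb := (hrs ht).1.ratio_bounds hk
      have h1k : 0 < 1 / k := by positivity
      rw [sq_le_sq, abs_of_pos (show 0 < 1 + 1 / k + |l| by positivity), abs_le]
      constructor <;> linarith [neg_abs_le l, le_abs_self l]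
    have hbound : ∀ t ∈ Ioo e r, ε ^ 2 ≤ (1 + A t / x t - l) ^ 2 →
        κ / (t - e) ≤ 2 * ((1 + A t / x t - l) *
          (deriv A t + (1 + A t / x t) - (1 + A t / x t) ^ 2)) / |x t| := by
      intro t ht h
      obtain ⟨hb, hc, hd⟩ := hrs ht
      have h0 : 0 < t - e := sub_pos.2 ht.1
      have hx0 : 0 < |x t| := abs_pos.2 (right_ne_zero_of_mul hb.2.1.ne)
      rw [hκ, div_div]
      have := hpos t hb hd h
      have hcp : 0 ≤ ε ^ 2 * S / 4 := by positivity
      apply div_le_div₀ (by linarith) (by linarith) hx0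
      linarith [hb.2.2.2]
    rcases hsgn with ⟨-, hs⟩ | ⟨-, hs⟩
    · obtain ⟨r', hr', hrs'⟩ := mem_nhdsGT_iff_exists_Ioo_subset.1 hs
      refine eventually_le_of_log (r := min r r') (lt_min hr hr') hκ0
        (fun t ht => hpd t (hrs ⟨ht.1, ht.2.trans_le (min_le_left _ _)⟩).1)
        (fun t ht => hK t ⟨ht.1, ht.2.trans_le (min_le_left _ _)⟩) (Or.inr fun t ht h => ?_)
      have ht1 : t ∈ Ioo e r := ⟨ht.1, ht.2.trans_le (min_le_left _ _)⟩
      have hA0 : 0 < A t := hrs' ⟨ht.1, ht.2.trans_le (min_le_right _ _)⟩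
      have hx0 : x t < 0 := by nlinarith [(hrs ht1).1.2.1]
      have := hbound t ht1 h
      rw [abs_of_neg hx0, div_neg] at this
      rw [← mul_div_assoc, mul_assoc]
      linarith
    · obtain ⟨r', hr', hrs'⟩ := mem_nhdsGT_iff_exists_Ioo_subset.1 hs
      refine eventually_le_of_log (r := min r r') (lt_min hr hr') hκ0
        (fun t ht => hpd t (hrs ⟨ht.1, ht.2.trans_le (min_le_left _ _)⟩).1)
        (fun t ht => hK t ⟨ht.1, ht.2.trans_le (min_le_left _ _)⟩) (Or.inl fun t ht h => ?_)
      have ht1 : t ∈ Ioo e r := ⟨ht.1, ht.2.trans_le (min_le_left _ _)⟩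
      have hA0 : A t < 0 := hrs' ⟨ht.1, ht.2.trans_le (min_le_right _ _)⟩
      have hx0 : 0 < x t := by nlinarith [(hrs ht1).1.2.1]
      have := hbound t ht1 h
      rw [abs_of_pos hx0] at this
      rw [← mul_div_assoc, mul_assoc]
      exact this
  filter_upwards [hmain] with t ht
  have := abs_le_of_sq_le_sq ht hε.le
  rw [Real.dist_eq]
  linarith

lemma hasDerivWithinAt_Ici_zero {A : ℝ → ℝ} (hA : ContDiff ℝ 1 A) {k : ℝ} (hk : 0 < k)
    {x : ℝ → ℝ} (hx0 : ∀ t, A t = 0 → x t = 0) (hx : ∀ t, A t ≠ 0 → Branch A k x t)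
    {e : ℝ} (he : A e = 0) (hα : deriv A e ≠ 0) (hα4 : -(1 / 4) < deriv A e) :
    HasDerivWithinAt x ((1 - √(1 + 4 * deriv A e)) / 2) (Ici e) e := by
  have hAd := (hA.differentiable (by norm_num) e).hasDerivAt
  have hne : ∀ᶠ t in 𝓝[>] e, A t ≠ 0 := by
    have := hAd.eventually_ne (c := 0) hα
    exact this.filter_mono (nhdsWithin_mono e (fun t (ht : e < t) => ht.ne'))
  have hb : ∀ᶠ t in 𝓝[>] e, Branch A k x t := hne.mono fun t ht => hx t ht
  have hle : ∀ t, |x t| ≤ 2 * |A t| := fun t => by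
    by_cases h : A t = 0
    · simp [hx0 t h, h]
    · exact (hx t h).2.2.2
  have hcont : ContinuousAt x e := by
    have h1 : Tendsto (fun t => 2 * |A t|) (𝓝 e) (𝓝 (2 * |A e|)) :=
      (hA.continuous.abs.const_mul 2).tendsto e
    rw [he, abs_zero, mul_zero] at h1
    rw [ContinuousAt, hx0 e he]
    exact squeeze_zero_norm hle h1
  refine hasDerivWithinAt_Ici_of_tendsto_deriv (s := {t | Branch A k x t})
    (fun t ht => ht.1.differentiableAt.differentiableWithinAt) hcont.continuousWithinAt hb ?_
  refine (Branch.tendsto_slope hA hk he hα hα4 hb).congr' ?_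
  filter_upwards [hb] with t ht
  exact ht.1.deriv.symm

lemma hasDerivAt_of_zero {A : ℝ → ℝ} (hA : ContDiff ℝ 1 A) {k : ℝ} (hk : 0 < k)
    {x : ℝ → ℝ} (hx0 : ∀ t, A t = 0 → x t = 0) (hx : ∀ t, A t ≠ 0 → Branch A k x t)
    {e : ℝ} (he : A e = 0) (hα : deriv A e ≠ 0) (hα4 : -(1 / 4) < deriv A e) :
    HasDerivAt x ((1 - √(1 + 4 * deriv A e)) / 2) e := by
  have hr := hasDerivWithinAt_Ici_zero hA hk hx0 hx he hα hα4
  have hB : ContDiff ℝ 1 (fun s => -A (-s)) := (hA.comp contDiff_neg).neg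
  have hl := hasDerivWithinAt_Ici_zero hB hk (x := fun s => -x (-s))
    (fun t ht => by simp [hx0 (-t) (by simpa using ht)])
    (fun t ht => (hx (-t) (by simpa using ht)).reflect) (e := -e) (by simp [he])
    (by rw [deriv_reflect, neg_neg]; exact hα) (by rw [deriv_reflect, neg_neg]; exact hα4)
  rw [deriv_reflect, neg_neg] at hl
  have hl' : HasDerivWithinAt x ((1 - √(1 + 4 * deriv A e)) / 2) (Iic e) e := by
    have h1 := (hl.scomp e (hasDerivAt_neg e).hasDerivWithinAt
      (s := Iic e) (fun t ht => mem_Ici.2 (neg_le_neg ht))).neg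
    have h2 : (-((fun s => -x (-s)) ∘ Neg.neg)) = x := by ext t; simp
    rw [h2] at h1
    simpa using h1
  have := hl'.union hr
  rw [Iic_union_Ici] at this
  exact this.hasDerivAt univ_mem

/-! ### Gluing the pieces -/

/-- `(a, b)` is a bounded connected component of `{A ≠ 0}`. -/
def IsComponent (A : ℝ → ℝ) (a b : ℝ) : Prop :=
  a < b ∧ A a = 0 ∧ A b = 0 ∧ ∀ t ∈ Ioo a b, A t ≠ 0

lemma exists_isComponent {A : ℝ → ℝ} (hA : Continuous A)
    (hz : ∀ t, (∃ a ≤ t, A a = 0) ∧ ∃ b ≥ t, A b = 0) {t : ℝ} (ht : A t ≠ 0) :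
    ∃ a b, IsComponent A a b ∧ t ∈ Ioo a b := by
  have hcl : IsClosed {s | A s = 0} := isClosed_eq hA continuous_const
  have ha := (hcl.inter (isClosed_Iic (a := t))).isGreatest_csSup
    (by obtain ⟨a, h1, h2⟩ := (hz t).1; exact ⟨a, h2, h1⟩) ⟨t, fun s hs => hs.2⟩
  have hb := (hcl.inter (isClosed_Ici (a := t))).isLeast_csInf
    (by obtain ⟨b, h1, h2⟩ := (hz t).2; exact ⟨b, h2, h1⟩) ⟨t, fun s hs => hs.2⟩
  set a := sSup ({s | A s = 0} ∩ Iic t)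
  set b := sInf ({s | A s = 0} ∩ Ici t)
  have hat : a < t := lt_of_le_of_ne ha.1.2 fun h => ht (h ▸ ha.1.1)
  have hbt : t < b := lt_of_le_of_ne hb.1.2 fun h => ht (h ▸ hb.1.1)
  refine ⟨a, b, ⟨hat.trans hbt, ha.1.1, hb.1.1, fun s hs h0 => ?_⟩, hat, hbt⟩
  rcases le_total s t with h | h
  · exact absurd (ha.2 ⟨h0, h⟩) (not_le.2 hs.1)
  · exact absurd (hb.2 ⟨h0, h⟩) (not_le.2 hs.2)

lemma IsComponent.unique {A : ℝ → ℝ} {a b a' b' t : ℝ} (h : IsComponent A a b)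
    (h' : IsComponent A a' b') (ht : t ∈ Ioo a b) (ht' : t ∈ Ioo a' b') : a = a' ∧ b = b' := by
  obtain ⟨-, ha, hb, hne⟩ := h
  obtain ⟨-, ha', hb', hne'⟩ := h'
  constructor
  · rcases lt_trichotomy a a' with hlt | heq | hlt
    · exact absurd ha' (hne a' ⟨hlt, ht'.1.trans ht.2⟩)
    · exact heq
    · exact absurd ha (hne' a ⟨hlt, ht.1.trans ht'.2⟩)
  · rcases lt_trichotomy b b' with hlt | heq | hlt
    · exact absurd hb (hne' b ⟨ht'.1.trans ht.2, hlt⟩)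
    · exact heq
    · exact absurd hb' (hne b' ⟨ht.1.trans ht'.2, hlt⟩)

/-- The branches on the components of `{A ≠ 0}`, extended by `0` at the zeros of `A`. -/
lemma exists_global_branch {A : ℝ → ℝ} (hA : ContDiff ℝ 1 A) {k : ℝ} (hk0 : 0 < k)
    (hk : ∀ t, k ^ 2 * deriv A t ≤ 1 - k) (hA4 : ∀ t, -(1 / 4) < deriv A t)
    (hz : ∀ t, (∃ a ≤ t, A a = 0) ∧ ∃ b ≥ t, A b = 0) :
    ∃ x : ℝ → ℝ, (∀ t, A t = 0 → x t = 0) ∧ ∀ t, A t ≠ 0 → Branch A k x t := by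
  classical
  choose a b hab ht using fun t (h : A t ≠ 0) => exists_isComponent hA.continuous hz h
  choose X hX using fun a b (h : IsComponent A a b) =>
    exists_component hA hk0 hk hA4 h.1 h.2.1 h.2.2.1 h.2.2.2
  refine ⟨fun t => if h : A t ≠ 0 then X (a t h) (b t h) (hab t h) t else 0,
    fun t h => by simp [h], fun t h => ?_⟩
  refine (hX _ _ (hab t h) t (ht t h)).congr ?_
  filter_upwards [Ioo_mem_nhds (ht t h).1 (ht t h).2] with s hs
  have h' : A s ≠ 0 := (hab t h).2.2.2 s hs
  rw [dif_pos h']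
  have key : ∀ a₁ b₁ a₂ b₂ (h₁ : IsComponent A a₁ b₁) (h₂ : IsComponent A a₂ b₂),
      a₁ = a₂ → b₁ = b₂ → X a₁ b₁ h₁ s = X a₂ b₂ h₂ s := by
    rintro a₁ b₁ a₂ b₂ h₁ h₂ rfl rfl
    rfl
  obtain ⟨e1, e2⟩ := (hab s h').unique (hab t h) (ht s h') hs
  exact key _ _ _ _ _ _ e1 e2

/-! ### Uniqueness -/

/-- Two solutions that vanish at the zeros of `A` and have the sign of `-A` elsewhere coincide: the
function `(x² - y²)²`, with derivative `4 (x - y)² (x + y)`, is monotone between consecutive zeros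
of `A` and vanishes at both of them. -/
lemma eq_of_sign {A x y : ℝ → ℝ} (hA : Continuous A)
    (hz : ∀ t, (∃ a ≤ t, A a = 0) ∧ ∃ b ≥ t, A b = 0)
    (hx : Differentiable ℝ x) (hy : Differentiable ℝ y)
    (hxe : ∀ t, x t * deriv x t = A t + x t) (hye : ∀ t, y t * deriv y t = A t + y t)
    (hx0 : ∀ t, A t = 0 → x t = 0) (hy0 : ∀ t, A t = 0 → y t = 0)
    (hxs : ∀ t, A t ≠ 0 → A t * x t < 0) (hys : ∀ t, A t ≠ 0 → A t * y t < 0) : x = y := by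
  ext t
  by_cases ht : A t = 0
  · rw [hx0 t ht, hy0 t ht]
  obtain ⟨a, b, ⟨hab, ha, hb, hne⟩, htab⟩ := exists_isComponent hA hz ht
  set F : ℝ → ℝ := fun s => (x s ^ 2 - y s ^ 2) ^ 2 with hF
  have hFd : ∀ s, HasDerivAt F (4 * (x s - y s) ^ 2 * (x s + y s)) s := by
    intro s
    refine ((((hx s).hasDerivAt.pow 2).sub ((hy s).hasDerivAt.pow 2)).pow 2).congr_deriv ?_
    simp only [Nat.cast_ofNat, Nat.add_one_sub_one, pow_one, Pi.sub_apply, Pi.pow_apply]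
    linear_combination 4 * (x s ^ 2 - y s ^ 2) * (hxe s - hye s)
  have hFc : Continuous F := by
    have := hx.continuous; have := hy.continuous; fun_prop
  have hFdiff : Differentiable ℝ F := fun s => (hFd s).differentiableAt
  have hFa : F a = 0 := by simp [hF, hx0 a ha, hy0 a ha]
  have hFb : F b = 0 := by simp [hF, hx0 b hb, hy0 b hb]
  have hFt : F t ≤ 0 := by
    rcases sign_component hA hne with hs | hs
    · have := antitoneOn_of_deriv_nonpos (convex_Icc a b) hFc.continuousOn
        hFdiff.differentiableOn (fun s hs' => by
          rw [interior_Icc] at hs'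
          have h1 := hs s hs'
          have h2 := hxs s h1.ne'
          have h3 := hys s h1.ne'
          rw [(hFd s).deriv]
          exact mul_nonpos_of_nonneg_of_nonpos (by positivity)
            (by nlinarith))
      rw [← hFa]
      exact this ⟨le_rfl, hab.le⟩ ⟨htab.1.le, htab.2.le⟩ htab.1.le
    · have := monotoneOn_of_deriv_nonneg (convex_Icc a b) hFc.continuousOn
        hFdiff.differentiableOn (fun s hs' => by
          rw [interior_Icc] at hs'
          have h1 := hs s hs'
          have h2 := hxs s h1.ne
          have h3 := hys s h1.ne
          rw [(hFd s).deriv]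
          exact mul_nonneg (by positivity) (by nlinarith))
      rw [← hFb]
      exact this ⟨htab.1.le, htab.2.le⟩ ⟨hab.le, le_rfl⟩ htab.2.le
  have h0 : x t ^ 2 - y t ^ 2 = 0 := by
    have : F t = 0 := le_antisymm hFt (sq_nonneg _)
    simpa [hF] using this
  have hsum : x t + y t ≠ 0 := by
    intro h
    have h1 := hxs t ht
    have h2 := hys t ht
    have : A t * (x t + y t) = 0 := by rw [h, mul_zero]
    linarith
  have : (x t - y t) * (x t + y t) = 0 := by linear_combination h0
  exact sub_eq_zero.1 ((mul_eq_zero.1 this).resolve_right hsum)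

/-- At a zero of a solution, L'Hôpital's rule for `x² / (t - q)²` gives `l² = A' + l` for the slope
`l`; continuity of `x'` is not needed. -/
lemma slope_eq_at_zero {A x : ℝ → ℝ} (hA : Differentiable ℝ A) (hx : Differentiable ℝ x)
    (hxe : ∀ t, x t * deriv x t = A t + x t) {q : ℝ} (hq : x q = 0) :
    deriv x q ^ 2 = deriv A q + deriv x q := by
  have hAq : A q = 0 := by have := hxe q; rw [hq] at this; linarith
  have hsx := hasDerivAt_iff_tendsto_slope.1 (hx q).hasDerivAt
  have hsA := hasDerivAt_iff_tendsto_slope.1 (hA q).hasDerivAt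
  have hne : ∀ᶠ t in 𝓝[≠] q, t - q ≠ 0 :=
    eventually_nhdsWithin_of_forall fun t ht => sub_ne_zero.2 ht
  have h1 : Tendsto (fun t => x t ^ 2 / (t - q) ^ 2) (𝓝[≠] q) (𝓝 (deriv A q + deriv x q)) := by
    refine HasDerivAt.lhopital_zero_nhdsNE (f' := fun t => 2 * (A t + x t))
      (g' := fun t => 2 * (t - q)) (Eventually.of_forall fun t => ?_)
      (Eventually.of_forall fun t => ?_) (hne.mono fun t ht => mul_ne_zero two_ne_zero ht) ?_ ?_ ?_
    · refine ((hx t).hasDerivAt.pow 2).congr_deriv ?_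
      rw [← hxe t]; push_cast; ring
    · refine (((hasDerivAt_id t).sub_const q).pow 2).congr_deriv ?_
      simp
    · have : Continuous fun t => x t ^ 2 := hx.continuous.pow 2
      have := this.tendsto q
      rw [hq] at this
      simpa using this.mono_left nhdsWithin_le_nhds
    · have : Continuous fun t : ℝ => (t - q) ^ 2 := by fun_prop
      have := this.tendsto q
      simpa using this.mono_left nhdsWithin_le_nhds
    · refine (hsA.add hsx).congr' ?_
      filter_upwards [hne] with t ht
      rw [slope_def_field, slope_def_field, hq, hAq]
      field_simp
      ring
  refine tendsto_nhds_unique ((hsx.pow 2).congr' ?_) h1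
  filter_upwards [hne] with t ht
  rw [slope_def_field, hq, sub_zero, div_pow]

/-- A solution that is positive at `t` and has a later zero satisfies `A t < 0`. At the first zero
`q` after `t` the slope `l` is negative, so `(x + 2A)' = l (2 l - 1) > 0` there and `x + 2A < 0` just
before `q`; the barrier `x = -2A` propagates this back to `t`. -/
lemma neg_of_pos {A x : ℝ → ℝ} (hA : Differentiable ℝ A) (hA4 : ∀ t, -(1 / 4) < deriv A t)
    (hsimple : ∀ t, A t = 0 → deriv A t ≠ 0) (hx : Differentiable ℝ x)
    (hxe : ∀ t, x t * deriv x t = A t + x t) {t : ℝ} (hq : ∃ q ≥ t, x q = 0) (ht : 0 < x t) :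
    A t < 0 := by
  have hcl : IsClosed {s | x s = 0} := isClosed_eq hx.continuous continuous_const
  have hb := (hcl.inter (isClosed_Ici (a := t))).isLeast_csInf
    (by obtain ⟨b, h1, h2⟩ := hq; exact ⟨b, h2, h1⟩) ⟨t, fun s hs => hs.2⟩
  set q := sInf ({s | x s = 0} ∩ Ici t)
  have hxq : x q = 0 := hb.1.1
  have htq : t < q := lt_of_le_of_ne hb.1.2 fun h => ht.ne' (h ▸ hxq)
  have hpos : ∀ s ∈ Ico t q, 0 < x s := by
    intro s hs
    by_contra hcon
    obtain ⟨c, hc, hc0⟩ := isPreconnected_Icc.intermediate_value (right_mem_Icc.2 hs.1)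
      (left_mem_Icc.2 hs.1) hx.continuous.continuousOn
      (show (0 : ℝ) ∈ Icc (x s) (x t) from ⟨not_lt.1 hcon, ht.le⟩)
    exact absurd (hb.2 ⟨hc0, hc.1⟩) (not_le.2 (hc.2.trans_lt hs.2))
  have hAq : A q = 0 := by have := hxe q; rw [hxq] at this; linarith
  have hsq := slope_eq_at_zero hA hx hxe hxq
  have hleft : 𝓝[<] q ≤ 𝓝[≠] q := nhdsWithin_mono q fun s (hs : s < q) => hs.ne
  have hle : deriv x q ≤ 0 := by
    refine le_of_tendsto ((hasDerivAt_iff_tendsto_slope.1 (hx q).hasDerivAt).mono_left hleft) ?_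
    filter_upwards [Ioo_mem_nhdsLT htq] with s hs
    rw [slope_def_field, hxq, sub_zero]
    exact div_nonpos_of_nonneg_of_nonpos (hpos s ⟨hs.1.le, hs.2⟩).le (by linarith [hs.2])
  have hlt : deriv x q < 0 := by
    refine lt_of_le_of_ne hle fun h => hsimple q hAq ?_
    rw [h] at hsq
    linarith
  have hg : ∀ s, HasDerivAt (fun s => -(x s + 2 * A s)) (-(deriv x s + 2 * deriv A s)) s :=
    fun s => ((hx s).hasDerivAt.add ((hA s).hasDerivAt.const_mul 2)).neg
  have hgq : -(deriv x q + 2 * deriv A q) < 0 := by nlinarith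
  obtain ⟨s, hs1, hs2⟩ : ∃ s ∈ Ioo t q, 0 < -(x s + 2 * A s) := by
    have h1 := ((hasDerivAt_iff_tendsto_slope.1 (hg q)).mono_left hleft).eventually
      (gt_mem_nhds hgq)
    obtain ⟨s, hs, hs'⟩ := (h1.and (Ioo_mem_nhdsLT htq)).exists
    refine ⟨s, hs', ?_⟩
    have h0 : s - q < 0 := by linarith [hs'.2]
    rw [slope_def_field, hxq, hAq, div_lt_iff_of_neg h0] at hs
    linarith
  by_contra hcon
  push Not at hcon
  have key := image_le_of_deriv_right_lt_deriv_boundary'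
    (f := fun s => -(x s + 2 * A s)) (B := fun _ => 0) (B' := fun _ => 0) (a := t) (b := s)
    (fun u _ => (hg u).continuousAt.continuousWithinAt) (fun u _ => (hg u).hasDerivWithinAt)
    (by linarith) continuousOn_const (fun u _ => hasDerivWithinAt_const _ _ _)
    (fun u hu h0 => by
      have hu0 := hpos u ⟨hu.1, hu.2.trans hs1.2⟩
      have h1 : A u = -(x u / 2) := by linarith
      have h2 : x u * deriv x u = x u * (1 / 2) := by rw [hxe u, h1]; ring
      have h3 := mul_left_cancel₀ hu0.ne' h2
      have := hA4 u
      linarith) (x := s) ⟨hs1.1.le, le_rfl⟩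
  linarith

lemma sign_of_zeros {A x : ℝ → ℝ} (hA : Differentiable ℝ A)
    (hA4 : ∀ t, -(1 / 4) < deriv A t)
    (hsimple : ∀ t, A t = 0 → deriv A t ≠ 0) (hx : Differentiable ℝ x)
    (hxe : ∀ t, x t * deriv x t = A t + x t)
    (hz : ∀ t, (∃ a ≤ t, x a = 0) ∧ ∃ b ≥ t, x b = 0) :
    (∀ t, A t = 0 → x t = 0) ∧ (∀ t, A t ≠ 0 → A t * x t < 0) := by
  have hpos : ∀ t, 0 < x t → A t < 0 := fun t ht =>
    neg_of_pos hA hA4 hsimple hx hxe (hz t).2 ht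
  have hneg : ∀ t, x t < 0 → 0 < A t := by
    intro t ht
    have hBd : Differentiable ℝ (fun s => -A (-s)) := (hA.comp differentiable_neg).neg
    have hxd : Differentiable ℝ (fun s => -x (-s)) := (hx.comp differentiable_neg).neg
    have := neg_of_pos (t := -t) hBd (fun s => by rw [deriv_reflect]; exact hA4 _)
      (fun s hs => by rw [deriv_reflect]; exact hsimple _ (by simpa using hs)) hxd
      (fun s => by rw [deriv_reflect]; linarith [hxe (-s)])
      (by obtain ⟨a, h1, h2⟩ := (hz t).1; exact ⟨-a, neg_le_neg h1, by simp [h2]⟩)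
      (by simpa using ht)
    simpa using this
  constructor
  · intro t ht
    by_contra h
    rcases lt_or_gt_of_ne h with h | h
    · exact (hneg t h).ne' ht
    · exact (hpos t h).ne ht
  · intro t ht
    have h : x t ≠ 0 := fun h => ht (by have := hxe t; rw [h] at this; linarith)
    rcases lt_or_gt_of_ne h with h | h
    · nlinarith [hneg t h]
    · nlinarith [hpos t h]

lemma zeros_unbounded {f : ℝ → ℝ} {T : ℝ} (hT : 0 < T) (hf : Function.Periodic f T)
    {z : ℝ} (hz : f z = 0) (t : ℝ) : (∃ a ≤ t, f a = 0) ∧ ∃ b ≥ t, f b = 0 := by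
  obtain ⟨b, hb, hb'⟩ := hf.exists_mem_Ico hT z t
  obtain ⟨a, ha, ha'⟩ := hf.exists_mem_Ico hT z (t - T)
  exact ⟨⟨a, by linarith [ha.2], by rw [← ha', hz]⟩, b, hb.1, by rw [← hb', hz]⟩

end AbelNF

open AbelNF in
/-- if A is C¹, T-periodic, has a zero in [0,T], min A′ > −1/4 and all zeros
of A are simple, then (NF): x·x′ = A(t) + x has exactly one T-periodic solution with
nonconstant sign. -/
theorem normal_form_unique_nonconstant_sign_solution
    (T : ℝ) (hT : 0 < T) (A : ℝ → ℝ) (hA : ContDiff ℝ 1 A)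
    (hAper : Function.Periodic A T)
    (hzero : ∃ t ∈ Icc (0 : ℝ) T, A t = 0)
    (hmin : sInf ((fun t => deriv A t) '' Icc (0 : ℝ) T) > -(1 / 4))
    (hsimple : ∀ t : ℝ, A t = 0 → deriv A t ≠ 0) :
    ∃! x : ℝ → ℝ, Differentiable ℝ x ∧ Function.Periodic x T ∧
      (∀ t : ℝ, x t * deriv x t = A t + x t) ∧
      (∃ t₀ : ℝ, x t₀ = 0) ∧ (∃ t : ℝ, x t ≠ 0) := by
  obtain ⟨e, -, he⟩ := hzero
  have hAdiff : Differentiable ℝ A := hA.differentiable (by norm_num)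
  have hA'c : Continuous (deriv A) := hA.continuous_deriv (by norm_num)
  have hA'per : Function.Periodic (deriv A) T := fun t => by
    rw [← deriv_comp_add_const, funext hAper]
  obtain ⟨C, hC⟩ := isCompact_Icc.exists_bound_of_continuousOn
    (hA'c.continuousOn (s := Icc 0 T))
  have hred : ∀ t, ∃ s ∈ Icc 0 T, deriv A t = deriv A s := fun t => by
    obtain ⟨s, hs, h⟩ := hA'per.exists_mem_Ico₀ hT t
    exact ⟨s, ⟨hs.1, hs.2.le⟩, h⟩
  have hA4 : ∀ t, -(1 / 4) < deriv A t := fun t => by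
    obtain ⟨s, hs, h⟩ := hred t
    rw [h]
    exact lt_of_lt_of_le hmin (csInf_le (isCompact_Icc.image hA'c).bddBelow ⟨s, hs, rfl⟩)
  have hA'C : ∀ t, deriv A t ≤ C := fun t => by
    obtain ⟨s, hs, h⟩ := hred t
    rw [h]
    exact (le_abs_self _).trans (hC s hs)
  have hC0 : 0 ≤ C := (norm_nonneg _).trans (hC 0 ⟨le_rfl, hT.le⟩)
  have hz := zeros_unbounded hT hAper he
  -- `k` satisfies `k² A' ≤ 1 - k`, the condition for `x = -kA` to be a barrier.
  set k := 1 / (2 * (C + 1)) with hkdef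
  have hk0 : 0 < k := by positivity
  have hkC : k * (C + 1) = 1 / 2 := by rw [hkdef]; field_simp
  have hk : ∀ t, k ^ 2 * deriv A t ≤ 1 - k := fun t => by
    have h1 : k ≤ 1 / 2 := by nlinarith
    have h2 : k ^ 2 * deriv A t ≤ k * (k * (C + 1)) := by nlinarith [hA'C t, sq_nonneg k]
    rw [hkC] at h2
    linarith
  obtain ⟨x, hx0, hxb⟩ := exists_global_branch hA hk0 hk hA4 hz
  have hxd : Differentiable ℝ x := fun t => by
    by_cases h : A t = 0
    · exact (hasDerivAt_of_zero hA hk0 hx0 hxb h (hsimple t h) (hA4 t)).differentiableAt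
    · exact (hxb t h).1.differentiableAt
  have hxe : ∀ t, x t * deriv x t = A t + x t := fun t => by
    by_cases h : A t = 0
    · simp [h, hx0 t h]
    · have := right_ne_zero_of_mul (hxb t h).2.1.ne
      rw [(hxb t h).1.deriv]
      field_simp
      ring
  have hxs : ∀ t, A t ≠ 0 → A t * x t < 0 := fun t h => (hxb t h).2.1
  have hxper : Function.Periodic x T := by
    have : (fun t => x (t + T)) = x := by
      refine eq_of_sign hA.continuous hz (hxd.comp (differentiable_id.add_const T)) hxd
        (fun t => ?_) hxe (fun t h => hx0 _ (by rw [hAper, h])) hx0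
        (fun t h => ?_) hxs
      · rw [deriv_comp_add_const, hxe, hAper]
      · have := hxs (t + T) (by rwa [hAper])
        rwa [hAper] at this
    exact fun t => congrFun this t
  obtain ⟨s, hs⟩ : ∃ s, A s ≠ 0 := by
    by_contra! h
    exact hsimple e he (by rw [show A = fun _ => 0 from funext h]; simp)
  refine ⟨x, ⟨hxd, hxper, hxe, ⟨e, hx0 e he⟩, s, right_ne_zero_of_mul (hxs s hs).ne⟩, ?_⟩
  rintro y ⟨hyd, hyper, hye, ⟨t₀, ht₀⟩, -⟩
  obtain ⟨hy0, hys⟩ := sign_of_zeros hAdiff hA4 hsimple hyd hye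
    (zeros_unbounded hT hyper ht₀)
  exact eq_of_sign hA.continuous hz hyd hxd hye hxe hy0 hx0 hys hxs
end

section
/- Let T > 0 and let A: ℝ → ℝ be C¹ and T-periodic, with at least one zero in [0,T], with min_{t∈[0,T]} A′(t) > −1/4, with all zeros of A simple (A′(t) ≠ 0 whenever A(t) = 0), and with ∫₀ᵀ A(t) dt = 0. Then the normal form equation (NF) has exactly one T-periodic solution. -/
/-!
In the plane, `t' = x`, `x' = A(t) + x` has its equilibria at the zeros of `A` on the axis `x = 0`.
A zero with `A' > 0` is a saddle and one with `-1/4 < A' < 0` is an unstable node; they alternate.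
Between two consecutive zeros of `A`, let `s` be the distance to the saddle and `y = |x|`. Where
`x A < 0`, the square `z = y²` satisfies `dz/ds = 2 |A| - 2 √z`, whose right-hand side decreases
in `z`. All estimates come from one comparison principle, `nonpos_of_deriv_nonpos`.

Existence. The equation for `z` with `z = 0` at the saddle is solved by Lipschitz regularisation
(`exists_solution_sq`). Since `A' > -1/4`, the solution stays below the line of slope `1/2` through
the node and therefore ends at the node (`exists_connection`). Further barriers show that its slopes
at both ends are the smaller root of `μ² - μ = A'` (`tendsto_saddle`, `tendsto_node`). These slopes
depend only on the zero of `A`, so the pieces glue to a differentiable solution on `ℝ` that vanishes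
at the zeros of `A` (`exists_solution`).

Uniqueness. Two solutions vanishing at all zeros of `A` coincide (`IsNFSolution.eq_of_vanish`):
between zeros of `A`, Rolle's theorem gives `x A < 0`, and the comparison principle applies to the
difference of the squares. In particular the solution above equals its translate by `T`, so it is
periodic. Conversely a periodic solution has mean zero because `∫ A = 0`, hence has zeros
(`IsNFSolution.exists_zero`), and the line of slope `1/2` used as a barrier again forces it to
vanish at every zero of `A` (`IsNFSolution.vanish`).
-/

open Set Filter Topology

/-! ### Comparison principle -/

/-- Comparison principle: a function that does not increase where it is positive cannot become
positive. -/
lemma nonpos_of_deriv_nonpos {w w' : ℝ → ℝ} {a b : ℝ} (hc : ContinuousOn w (Icc a b))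
    (hd : ∀ s ∈ Ioo a b, HasDerivAt w (w' s) s) (ha : w a ≤ 0)
    (h : ∀ s ∈ Ioo a b, 0 < w s → w' s ≤ 0) : ∀ s ∈ Icc a b, w s ≤ 0 := by
  intro s hs
  by_contra hpos
  push Not at hpos
  -- `c` is the last point of `[a, s]` where `w ≤ 0`
  set S := {u ∈ Icc a s | w u ≤ 0} with hS
  have hcs : ContinuousOn w (Icc a s) := hc.mono (Icc_subset_Icc_right hs.2)
  have hScl : IsClosed S := by
    have := hcs.preimage_isClosed_of_isClosed isClosed_Icc (isClosed_Iic (a := (0 : ℝ)))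
    exact this
  have hne : S.Nonempty := ⟨a, ⟨le_rfl, hs.1⟩, ha⟩
  have hbdd : BddAbove S := ⟨s, fun u hu => hu.1.2⟩
  obtain ⟨⟨hc1, hc2⟩, hc3⟩ := hScl.csSup_mem hne hbdd
  set c := sSup S
  have hlt : ∀ u ∈ Ioo c s, 0 < w u := by
    intro u hu
    by_contra hu'
    exact absurd (le_csSup hbdd (show u ∈ S from ⟨⟨hc1.trans hu.1.le, hu.2.le⟩, not_lt.1 hu'⟩))
      (not_le.2 hu.1)
  have hanti : AntitoneOn w (Icc c s) := by
    refine antitoneOn_of_hasDerivWithinAt_nonpos (f' := w') (convex_Icc c s)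
      (hcs.mono (Icc_subset_Icc_left hc1)) ?_ ?_
    · intro u hu
      rw [interior_Icc] at hu
      exact (hd u ⟨hc1.trans_lt hu.1, hu.2.trans_le hs.2⟩).hasDerivWithinAt
    · intro u hu
      rw [interior_Icc] at hu
      exact h u ⟨hc1.trans_lt hu.1, hu.2.trans_le hs.2⟩ (hlt u hu)
  have := hanti ⟨le_rfl, hc2⟩ ⟨hc2, le_rfl⟩ hc2
  linarith

/-! ### The equation for the square of a solution -/

lemma abs_sqrt_sub_sqrt_le {a b : ℝ} (ha : 0 ≤ a) (hb : 0 ≤ b) : |√a - √b| ≤ √|a - b| := by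
  apply Real.abs_le_sqrt
  have h1 := Real.sqrt_nonneg a
  have h2 := Real.sqrt_nonneg b
  have e : a - b = (√a - √b) * (√a + √b) := by
    nlinarith [Real.sq_sqrt ha, Real.sq_sqrt hb]
  rw [e, abs_mul, ← sq_abs, sq]
  refine mul_le_mul_of_nonneg_left ?_ (abs_nonneg _)
  rw [abs_of_nonneg (add_nonneg h1 h2)]
  exact abs_le.2 ⟨by linarith, by linarith⟩

/-- The Lipschitz regularisation of the right-hand side `g - 2√z`, with `√z` replaced by
`√(max z 0 + η²)`, can be solved on the whole of `[0, L]`. -/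
lemma exists_regularized {g : ℝ → ℝ} (hg : Continuous g) {L η : ℝ} (hL : 0 < L) (hη : 0 < η)
    (hη1 : η ≤ 1) :
    ∃ z : ℝ → ℝ, z 0 = 0 ∧ ContinuousOn z (Icc 0 L) ∧
      ∀ s ∈ Ioo 0 L, HasDerivAt z (g s - 2 * √(max (z s) 0 + η ^ 2)) s := by
  obtain ⟨G, hG⟩ := (isCompact_Icc (a := (0 : ℝ)) (b := L)).exists_bound_of_continuousOn
    hg.continuousOn
  have hG0 : 0 ≤ G := (norm_nonneg _).trans (hG 0 ⟨le_rfl, hL.le⟩)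
  -- `b = √(a + 1)` for the radius `a` of the ball; chosen so that `(G + 2 b) L ≤ a = b² - 1`
  set b : ℝ := 2 * L + G * L + 1 with hb
  have hb1 : 1 ≤ b := by have := mul_nonneg hG0 hL.le; linarith
  have hGL := mul_nonneg hG0 hL.le
  let a : NNReal := ⟨b ^ 2 - 1, by nlinarith⟩
  let M : NNReal := ⟨G + 2 * b, by linarith⟩
  let K : NNReal := ⟨2 / η, by positivity⟩
  have hPL : IsPicardLindelof (fun s z => g s - 2 * √(max z 0 + η ^ 2))
      (⟨0, ⟨le_rfl, hL.le⟩⟩ : Icc 0 L) 0 a 0 M K := by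
    refine ⟨?_, ?_, ?_, ?_⟩
    · intro t _
      refine LipschitzWith.lipschitzOnWith (LipschitzWith.of_dist_le_mul fun x y => ?_)
      rw [Real.dist_eq, Real.dist_eq]
      change _ ≤ 2 / η * _
      have hx : 0 ≤ max x 0 + η ^ 2 := by positivity
      have hy : 0 ≤ max y 0 + η ^ 2 := by positivity
      have hx1 : η ≤ √(max x 0 + η ^ 2) := Real.le_sqrt_of_sq_le (by
        have := le_max_right x 0; linarith)
      have hy1 : 0 ≤ √(max y 0 + η ^ 2) := Real.sqrt_nonneg _
      have e : (√(max y 0 + η ^ 2) - √(max x 0 + η ^ 2)) *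
          (√(max y 0 + η ^ 2) + √(max x 0 + η ^ 2)) = max y 0 - max x 0 := by
        nlinarith [Real.sq_sqrt hx, Real.sq_sqrt hy]
      have e2 : |√(max y 0 + η ^ 2) - √(max x 0 + η ^ 2)| * η ≤ |x - y| := by
        calc _ ≤ |√(max y 0 + η ^ 2) - √(max x 0 + η ^ 2)| *
              |√(max y 0 + η ^ 2) + √(max x 0 + η ^ 2)| := by
              refine mul_le_mul_of_nonneg_left ?_ (abs_nonneg _)
              exact le_trans (by linarith) (le_abs_self _)
          _ = |max y 0 - max x 0| := by rw [← abs_mul, e]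
          _ ≤ |y - x| := abs_max_sub_max_le_abs _ _ _
          _ = |x - y| := abs_sub_comm _ _
      have e3 : g t - 2 * √(max x 0 + η ^ 2) - (g t - 2 * √(max y 0 + η ^ 2)) =
          2 * (√(max y 0 + η ^ 2) - √(max x 0 + η ^ 2)) := by ring
      rw [e3, abs_mul, abs_of_pos (by norm_num : (0 : ℝ) < 2), div_mul_eq_mul_div, le_div_iff₀ hη]
      linarith
    · intro x _
      fun_prop
    · intro t ht x hx
      have hx' : |x| ≤ b ^ 2 - 1 := by
        have := hx
        rw [Metric.mem_closedBall, Real.dist_eq, sub_zero] at this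
        exact this
      change ‖g t - 2 * √(max x 0 + η ^ 2)‖ ≤ G + 2 * b
      have h1 : √(max x 0 + η ^ 2) ≤ b := by
        apply Real.sqrt_le_iff.2 ⟨by linarith, ?_⟩
        have : max x 0 ≤ b ^ 2 - 1 := max_le ((le_abs_self x).trans hx') (by nlinarith)
        nlinarith
      have h2 := Real.sqrt_nonneg (max x 0 + η ^ 2)
      have h3 := hG t ht
      rw [Real.norm_eq_abs] at h3 ⊢
      have h4 := abs_le.1 h3
      exact abs_le.2 ⟨by linarith, by linarith⟩
    · change (G + 2 * b) * max (L - 0) (0 - 0) ≤ b ^ 2 - 1 - 0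
      rw [sub_zero, sub_zero, sub_zero, max_eq_left hL.le]
      nlinarith
  obtain ⟨z, hz0, hz⟩ := hPL.exists_eq_forall_mem_Icc_hasDerivWithinAt₀
  exact ⟨z, hz0, fun s hs => (hz s hs).continuousWithinAt, fun s hs =>
    (hz s (Ioo_subset_Icc_self hs)).hasDerivAt (Icc_mem_nhds hs.1 hs.2)⟩

/-- The comparison estimate that makes the regularised solutions a uniform Cauchy family. -/
lemma regularized_sub_le {g : ℝ → ℝ} {L η δ : ℝ} (hδ : 0 < δ) {z y : ℝ → ℝ}
    (hz0 : z 0 = 0) (hy0 : y 0 = 0) (hzc : ContinuousOn z (Icc 0 L))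
    (hyc : ContinuousOn y (Icc 0 L))
    (hz : ∀ s ∈ Ioo 0 L, HasDerivAt z (g s - 2 * √(max (z s) 0 + η ^ 2)) s)
    (hy : ∀ s ∈ Ioo 0 L, HasDerivAt y (g s - 2 * √(max (y s) 0 + δ ^ 2)) s) :
    ∀ s ∈ Icc 0 L, z s - y s ≤ 2 * δ * L := by
  have key := nonpos_of_deriv_nonpos (w := fun s => z s - y s - 2 * δ * s)
    (w' := fun s => (g s - 2 * √(max (z s) 0 + η ^ 2)) - (g s - 2 * √(max (y s) 0 + δ ^ 2))
      - 2 * δ) (a := 0) (b := L) (by fun_prop)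
    (fun s hs => (((hz s hs).fun_sub (hy s hs)).fun_sub
      ((hasDerivAt_id s).const_mul (2 * δ))).congr_deriv (by rw [mul_one]))
    (by simp [hz0, hy0]) ?_
  · intro s hs
    have h1 := key s hs
    have h2 : 2 * δ * s ≤ 2 * δ * L := mul_le_mul_of_nonneg_left hs.2 (by positivity)
    linarith
  · intro s hs hpos
    have h0 : 0 < 2 * δ * s := mul_pos (by positivity) hs.1
    have hyz : max (y s) 0 ≤ max (z s) 0 := max_le_max (by linarith) le_rfl
    have h1 : √(max (y s) 0) ≤ √(max (z s) 0 + η ^ 2) := Real.sqrt_le_sqrt (by nlinarith)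
    have h2 : √(max (y s) 0 + δ ^ 2) ≤ √(max (y s) 0) + δ := by
      apply Real.sqrt_le_iff.2 ⟨by positivity, ?_⟩
      have := Real.sq_sqrt (le_max_right (y s) 0)
      nlinarith [mul_nonneg (Real.sqrt_nonneg (max (y s) 0)) hδ.le]
    linarith

/-- Solvability of `z' = g - 2√z`, `z 0 = 0`. For negative `z` the root is `0` by convention. -/
lemma exists_solution_sq {g : ℝ → ℝ} (hg : Continuous g) {L : ℝ} (hL : 0 < L) :
    ∃ z : ℝ → ℝ, z 0 = 0 ∧ ContinuousOn z (Icc 0 L) ∧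
      ∀ s ∈ Ioo 0 L, HasDerivAt z (g s - 2 * √(z s)) s := by
  have hηpos : ∀ n : ℕ, (0 : ℝ) < 1 / ((n : ℝ) + 1) := fun n => by positivity
  choose z hz0 hzc hz using fun n : ℕ => exists_regularized hg hL (hηpos n)
    (by rw [div_le_one (by positivity)]; linarith [Nat.cast_nonneg (α := ℝ) n])
  have hη : Tendsto (fun n : ℕ => 1 / ((n : ℝ) + 1)) atTop (𝓝 0) :=
    tendsto_one_div_add_atTop_nhds_zero_nat
  have hle : ∀ m n N : ℕ, N ≤ m → N ≤ n → ∀ s ∈ Icc 0 L,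
      |z m s - z n s| ≤ 2 * (1 / ((N : ℝ) + 1)) * L := by
    intro m n N hm hn s hs
    have aux : ∀ m n : ℕ, N ≤ n → z m s - z n s ≤ 2 * (1 / ((N : ℝ) + 1)) * L := by
      intro m n hn
      refine (regularized_sub_le (hηpos n) (hz0 m) (hz0 n) (hzc m) (hzc n) (hz m) (hz n) s hs).trans
        ?_
      gcongr
    exact abs_sub_le_iff.2 ⟨aux m n hn, aux n m hm⟩
  have hcau : ∀ s ∈ Icc 0 L, ∃ l, Tendsto (fun n => z n s) atTop (𝓝 l) := by
    intro s hs
    refine cauchySeq_tendsto_of_complete ?_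
    refine cauchySeq_of_le_tendsto_0 (fun N : ℕ => 2 * (1 / ((N : ℝ) + 1)) * L)
      (fun m n N hm hn => ?_) ?_
    · rw [Real.dist_eq]
      exact hle m n N hm hn s hs
    · simpa using (hη.const_mul 2).mul_const L
  choose! Z hZ using hcau
  have hZle : ∀ n : ℕ, ∀ s ∈ Icc 0 L, |Z s - z n s| ≤ 2 * (1 / ((n : ℝ) + 1)) * L := by
    intro n s hs
    refine le_of_tendsto ((hZ s hs).sub_const (z n s)).abs ?_
    filter_upwards [eventually_ge_atTop n] with m hm
    exact hle m n n hm le_rfl s hs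
  have hunif : TendstoUniformlyOn z Z atTop (Icc 0 L) := by
    rw [Metric.tendstoUniformlyOn_iff]
    intro ε hε
    have h0 : Tendsto (fun n : ℕ => 2 * (1 / ((n : ℝ) + 1)) * L) atTop (𝓝 0) := by
      simpa using (hη.const_mul 2).mul_const L
    filter_upwards [h0.eventually_lt_const hε] with n hn s hs
    rw [Real.dist_eq]
    exact (hZle n s hs).trans_lt hn
  refine ⟨Z, ?_, hunif.continuousOn (Frequently.of_forall hzc), ?_⟩
  · refine tendsto_nhds_unique (hZ 0 ⟨le_rfl, hL.le⟩) ?_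
    simp [hz0]
  · intro s hs
    refine hasDerivAt_of_tendstoUniformlyOn (f := z) (g := Z) (l := atTop)
      (f' := fun n s => g s - 2 * √(max (z n s) 0 + (1 / ((n : ℝ) + 1)) ^ 2))
      (g' := fun s => g s - 2 * √(Z s)) isOpen_Ioo ?_ (Eventually.of_forall hz)
      (fun x hx => hZ x (Ioo_subset_Icc_self hx)) hs
    rw [Metric.tendstoUniformlyOn_iff]
    intro ε hε
    have h0 : Tendsto (fun n : ℕ => 2 * √(2 * (1 / ((n : ℝ) + 1)) * L + (1 / ((n : ℝ) + 1)) ^ 2))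
        atTop (𝓝 0) := by
      have h1 := ((hη.const_mul 2).mul_const L).add (hη.pow 2)
      have h2 := (h1.sqrt).const_mul 2
      simpa using h2
    filter_upwards [h0.eventually_lt_const hε] with n hn u hu
    have hsq : √(Z u) = √(max (Z u) 0) := by
      rcases le_total (Z u) 0 with h | h
      · rw [max_eq_right h, Real.sqrt_eq_zero_of_nonpos h, Real.sqrt_zero]
      · rw [max_eq_left h]
    rw [Real.dist_eq, hsq]
    have e : g u - 2 * √(max (Z u) 0) - (g u - 2 * √(max (z n u) 0 + (1 / ((n : ℝ) + 1)) ^ 2))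
        = 2 * (√(max (z n u) 0 + (1 / ((n : ℝ) + 1)) ^ 2) - √(max (Z u) 0)) := by ring
    rw [e, abs_mul, abs_of_pos (by norm_num : (0 : ℝ) < 2)]
    refine lt_of_le_of_lt ?_ hn
    refine mul_le_mul_of_nonneg_left ((abs_sqrt_sub_sqrt_le (by positivity) (by positivity)).trans
      (Real.sqrt_le_sqrt ?_)) (by norm_num)
    have h1 : |max (z n u) 0 - max (Z u) 0| ≤ 2 * (1 / ((n : ℝ) + 1)) * L :=
      (abs_max_sub_max_le_abs _ _ _).trans
        ((abs_sub_comm _ _).le.trans (hZle n u (Ioo_subset_Icc_self hu)))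
    have h2 : (0 : ℝ) ≤ (1 / ((n : ℝ) + 1)) ^ 2 := by positivity
    have h3 := abs_le.1 h1
    exact abs_le.2 ⟨by linarith, by linarith⟩

/-! ### Connection from a saddle to a node -/

/-- If `r v'(r) ≥ δ > 0` as long as `v r > K`, then `v` falls below `K` and stays there as `r`
decreases to `0`: in the variable `-log r` it decreases at rate at least `δ` until it reaches `K`. -/
lemma eventually_le_of_log_deriv {v v' : ℝ → ℝ} {r₁ K δ : ℝ} (hr₁ : 0 < r₁) (hδ : 0 < δ)
    (hv : ∀ r ∈ Ioc 0 r₁, HasDerivAt v (v' r) r)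
    (h : ∀ r ∈ Ioc 0 r₁, K < v r → δ ≤ r * v' r) : ∀ᶠ r in 𝓝[>] (0 : ℝ), v r ≤ K := by
  set ρ : ℝ → ℝ := fun τ => r₁ * Real.exp (-τ) with hρ
  have hρmem : ∀ τ, 0 ≤ τ → ρ τ ∈ Ioc 0 r₁ := fun τ hτ =>
    ⟨by positivity, by
      have : Real.exp (-τ) ≤ 1 := Real.exp_le_one_iff.2 (by linarith)
      simp only [hρ]; nlinarith⟩
  have hρd : ∀ τ, HasDerivAt ρ (-ρ τ) τ := fun τ => by
    have := ((hasDerivAt_neg τ).exp).const_mul r₁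
    exact this.congr_deriv (by simp only [hρ]; ring)
  have hV : ∀ τ, 0 ≤ τ → HasDerivAt (fun τ => v (ρ τ)) (v' (ρ τ) * (-ρ τ)) τ := fun τ hτ =>
    (hv _ (hρmem τ hτ)).comp τ (hρd τ)
  have hVle : ∀ τ, 0 ≤ τ → K < v (ρ τ) → v' (ρ τ) * (-ρ τ) ≤ -δ := fun τ hτ hK => by
    have := h _ (hρmem τ hτ) hK
    linarith
  -- a time by which the descending line from `max (v r₁) K` has reached `K`
  set N : ℝ := (max (v r₁) K - K) / δ with hN
  have hN0 : 0 ≤ N := div_nonneg (sub_nonneg.2 (le_max_right _ _)) hδ.le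
  have hδN : δ * N = max (v r₁) K - K := by rw [hN]; field_simp
  have step1 : v (ρ N) ≤ K := by
    have := nonpos_of_deriv_nonpos (w := fun τ => v (ρ τ) - (K + δ * (N - τ)))
      (w' := fun τ => v' (ρ τ) * (-ρ τ) + δ) (a := 0) (b := N)
      (fun τ hτ => ((hV τ hτ.1).continuousAt.sub (by fun_prop)).continuousWithinAt)
      (fun τ hτ => ((hV τ hτ.1.le).fun_sub
        ((((hasDerivAt_id τ).const_sub N).const_mul δ).const_add K)).congr_deriv (by ring))
      (by
        have h0 : ρ 0 = r₁ := by simp [hρ]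
        have := le_max_left (v r₁) K
        simp only [h0, sub_zero, hδN]; linarith)
      (fun τ hτ hpos => by
        have h1 : 0 ≤ δ * (N - τ) := mul_nonneg hδ.le (by linarith [hτ.2])
        have := hVle τ hτ.1.le (by linarith)
        linarith) N ⟨hN0, le_rfl⟩
    simp only [sub_self, mul_zero, add_zero] at this
    linarith
  have step2 : ∀ τ, N ≤ τ → v (ρ τ) ≤ K := fun M hM => by
    have := nonpos_of_deriv_nonpos (w := fun τ => v (ρ τ) - K)
      (w' := fun τ => v' (ρ τ) * (-ρ τ)) (a := N) (b := M)
      (fun τ hτ => ((hV τ (hN0.trans hτ.1)).continuousAt.sub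
        continuousAt_const).continuousWithinAt)
      (fun τ hτ => (hV τ (hN0.trans hτ.1.le)).sub_const K)
      (by simpa using step1)
      (fun τ hτ hpos => by
        have := hVle τ (hN0.trans hτ.1.le) (by linarith)
        linarith) M ⟨hM, le_rfl⟩
    linarith
  have hmem : Ioc 0 (ρ N) ∈ 𝓝[>] (0 : ℝ) := Ioc_mem_nhdsGT (hρmem N hN0).1
  filter_upwards [hmem] with r hr
  have e : ρ (-Real.log (r / r₁)) = r := by
    simp only [hρ, neg_neg]
    rw [Real.exp_log (div_pos hr.1 hr₁)]
    field_simp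
  rw [← e]
  refine step2 _ ?_
  have h1 : r / r₁ ≤ Real.exp (-N) := by
    rw [div_le_iff₀ hr₁, mul_comm]; exact hr.2
  have := (Real.log_le_iff_le_exp (div_pos hr.1 hr₁)).2 h1
  linarith

/-- The smaller root of `μ² - μ - a = 0`: the slope of the stable direction at a saddle (`a > 0`),
and of the slow direction at a node (`-1/4 < a < 0`). -/
noncomputable def slowSlope (a : ℝ) : ℝ := (1 - √(1 + 4 * a)) / 2

lemma slowSlope_sq {a : ℝ} (ha : -(1 / 4) < a) : slowSlope a ^ 2 - slowSlope a = a := by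
  have := Real.sq_sqrt (show 0 ≤ 1 + 4 * a by linarith)
  unfold slowSlope
  nlinarith

lemma slowSlope_lt {a : ℝ} (ha : -(1 / 4) < a) : slowSlope a < 1 / 2 := by
  have := Real.sqrt_pos.2 (show 0 < 1 + 4 * a by linarith)
  unfold slowSlope
  linarith

lemma slowSlope_pos {a : ℝ} (ha : -(1 / 4) < a) (ha0 : a < 0) : 0 < slowSlope a := by
  nlinarith [slowSlope_sq ha, slowSlope_lt ha]

lemma slowSlope_neg {a : ℝ} (ha0 : 0 < a) : slowSlope a < 0 := by
  nlinarith [slowSlope_sq (a := a) (by linarith), slowSlope_lt (a := a) (by linarith)]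

lemma tendsto_div_of_hasDerivAt {f : ℝ → ℝ} {a : ℝ} (hf : HasDerivAt f a 0) (h0 : f 0 = 0) :
    Tendsto (fun s => f s / s) (𝓝[>] 0) (𝓝 a) := by
  have := hf.tendsto_slope_zero_right
  refine this.congr fun s => ?_
  simp [h0]; ring

/-- Along the solution starting at a saddle, `√z` has the slope of the stable direction. -/
lemma tendsto_saddle {f z : ℝ → ℝ} {L a : ℝ} (hL : 0 < L) (ha : 0 < a) (hf0 : f 0 = 0)
    (hfa : HasDerivAt f a 0) (hz0 : z 0 = 0) (hzc : ContinuousOn z (Icc 0 L))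
    (hz : ∀ s ∈ Ioo 0 L, HasDerivAt z (2 * f s - 2 * √(z s)) s) :
    Tendsto (fun s => √(z s) / s) (𝓝[>] 0) (𝓝 (-slowSlope a)) := by
  have hlim := tendsto_div_of_hasDerivAt hfa hf0
  set κ := -slowSlope a with hκ
  have hκ0 : 0 < κ := by have := slowSlope_neg ha; linarith
  have hκ2 : κ ^ 2 + κ = a := by
    have := slowSlope_sq (a := a) (by linarith)
    rw [hκ]; linarith
  have hzsq : ∀ (k s : ℝ), 0 < s → 0 ≤ k → k ^ 2 * s ^ 2 < z s → k * s < √(z s) := by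
    intro k s hs hk h
    exact Real.lt_sqrt_of_sq_lt (by rw [mul_pow]; exact h)
  have hdsq : ∀ (k s : ℝ), HasDerivAt (fun s => k ^ 2 * s ^ 2) (2 * k ^ 2 * s) s := by
    intro k s
    exact ((hasDerivAt_pow 2 s).const_mul (k ^ 2)).congr_deriv (by simp; ring)
  rw [tendsto_order]
  constructor
  · intro k₀ hk₀
    obtain ⟨k, hk1, hk2⟩ := exists_between (max_lt hk₀ hκ0)
    have hk0 : 0 < k := (le_max_right _ _).trans_lt hk1
    have hka : k ^ 2 + k < a := by nlinarith
    obtain ⟨ε, hε, hεf⟩ := (mem_nhdsGT_iff_exists_Ioo_subset' hL).1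
      (hlim.eventually (lt_mem_nhds hka))
    set M := min ε L
    have hM : 0 < M := lt_min hε hL
    have key := nonpos_of_deriv_nonpos (w := fun s => k ^ 2 * s ^ 2 - z s)
      (w' := fun s => 2 * k ^ 2 * s - (2 * f s - 2 * √(z s))) (a := 0) (b := M)
      ((by fun_prop : ContinuousOn (fun s => k ^ 2 * s ^ 2) _).sub
        (hzc.mono (Icc_subset_Icc_right (min_le_right _ _))))
      (fun s hs => (hdsq k s).fun_sub (hz s ⟨hs.1, hs.2.trans_le (min_le_right _ _)⟩))
      (by simp [hz0]) ?_
    · filter_upwards [Ioo_mem_nhdsGT hM] with s hs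
      have h1 := key s ⟨hs.1.le, hs.2.le⟩
      rw [lt_div_iff₀ hs.1]
      refine lt_of_lt_of_le (mul_lt_mul_of_pos_right ((le_max_left _ _).trans_lt hk1) hs.1) ?_
      exact Real.le_sqrt_of_sq_le (by rw [mul_pow]; linarith)
    · intro s hs hpos
      have h1 : k ^ 2 + k < f s / s := hεf ⟨hs.1, hs.2.trans_le (min_le_left _ _)⟩
      rw [lt_div_iff₀ hs.1] at h1
      have h2 : √(z s) ≤ k * s := Real.sqrt_le_iff.2
        ⟨(mul_pos hk0 hs.1).le, by rw [mul_pow]; linarith⟩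
      linarith
  · intro k₀ hk₀
    obtain ⟨k, hk1, hk2⟩ := exists_between hk₀
    have hk0 : 0 < k := hκ0.trans hk1
    have hka : a < k ^ 2 + k := by nlinarith
    obtain ⟨ε, hε, hεf⟩ := (mem_nhdsGT_iff_exists_Ioo_subset' hL).1
      (hlim.eventually (gt_mem_nhds hka))
    set M := min ε L
    have hM : 0 < M := lt_min hε hL
    have key := nonpos_of_deriv_nonpos (w := fun s => z s - k ^ 2 * s ^ 2)
      (w' := fun s => (2 * f s - 2 * √(z s)) - 2 * k ^ 2 * s) (a := 0) (b := M)
      ((hzc.mono (Icc_subset_Icc_right (min_le_right _ _))).sub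
        (by fun_prop : ContinuousOn (fun s => k ^ 2 * s ^ 2) _))
      (fun s hs => (hz s ⟨hs.1, hs.2.trans_le (min_le_right _ _)⟩).fun_sub (hdsq k s))
      (by simp [hz0]) ?_
    · filter_upwards [Ioo_mem_nhdsGT hM] with s hs
      have h1 := key s ⟨hs.1.le, hs.2.le⟩
      rw [div_lt_iff₀ hs.1]
      refine lt_of_le_of_lt ?_ (mul_lt_mul_of_pos_right hk2 hs.1)
      exact Real.sqrt_le_iff.2 ⟨(mul_pos hk0 hs.1).le, by rw [mul_pow]; linarith⟩
    · intro s hs hpos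
      have h1 : f s / s < k ^ 2 + k := hεf ⟨hs.1, hs.2.trans_le (min_le_left _ _)⟩
      rw [div_lt_iff₀ hs.1] at h1
      have h2 : k * s < √(z s) := hzsq k s hs.1 hk0.le (by linarith)
      linarith

/-- A solution arriving at a node below the line of slope `1/2` does so along the slow
direction. Here `r` is the distance to the node. -/
lemma tendsto_node {F z : ℝ → ℝ} {L b : ℝ} (hL : 0 < L) (hb : b < 0) (hb4 : -(1 / 4) < b)
    (hF0 : F 0 = 0) (hFb : HasDerivAt F (-b) 0) (hzpos : ∀ r ∈ Ioo 0 L, 0 < z r)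
    (hzle : ∀ r ∈ Ioo 0 L, √(z r) ≤ r / 2)
    (hz : ∀ r ∈ Ioo 0 L, HasDerivAt z (2 * √(z r) - 2 * F r) r) :
    Tendsto (fun r => √(z r) / r) (𝓝[>] 0) (𝓝 (slowSlope b)) := by
  have hlim := tendsto_div_of_hasDerivAt hFb hF0
  set l := slowSlope b with hl
  have hl0 : 0 < l := slowSlope_pos hb4 hb
  have hl1 : l < 1 / 2 := slowSlope_lt hb4
  have hl2 : l - l ^ 2 = -b := by have := slowSlope_sq hb4; linarith
  -- the logarithmic derivative of `v = z / r²` in terms of `u = √z / r`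
  set v' : ℝ → ℝ := fun r => 2 * (√(z r) / r - (√(z r) / r) ^ 2 - F r / r) / r with hv'
  have hv : ∀ r ∈ Ioo 0 L, HasDerivAt (fun r => (z r) / r ^ 2) (v' r) r := by
    intro r hr
    have hr0 : r ≠ 0 := hr.1.ne'
    refine ((hz r hr).fun_div (hasDerivAt_pow 2 r) (by positivity)).congr_deriv ?_
    have hs := Real.sq_sqrt (hzpos r hr).le
    simp only [hv', div_pow, hs]
    field_simp
    simp
    ring
  have hrv : ∀ r ∈ Ioo 0 L, r * v' r = 2 * (√(z r) / r - (√(z r) / r) ^ 2 - F r / r) := by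
    intro r hr
    have hr0 : r ≠ 0 := hr.1.ne'
    simp only [hv']
    field_simp
  have hu : ∀ r ∈ Ioo 0 L, z r / r ^ 2 = (√(z r) / r) ^ 2 := by
    intro r hr
    rw [div_pow, Real.sq_sqrt (hzpos r hr).le]
  have hu0 : ∀ r ∈ Ioo 0 L, 0 ≤ √(z r) / r := fun r hr =>
    div_nonneg (Real.sqrt_nonneg _) hr.1.le
  have hu1 : ∀ r ∈ Ioo 0 L, √(z r) / r ≤ 1 / 2 := fun r hr => by
    rw [div_le_iff₀ hr.1]; have := hzle r hr; linarith
  rw [tendsto_order]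
  constructor
  · intro k₀ hk₀
    obtain ⟨k, hk1, hk2⟩ := exists_between (max_lt hk₀ hl0)
    have hk0 : 0 < k := (le_max_right _ _).trans_lt hk1
    have hka : k - k ^ 2 < -b := by nlinarith
    obtain ⟨c, hc1, hc2⟩ := exists_between hka
    obtain ⟨ε, hε, hεf⟩ := (mem_nhdsGT_iff_exists_Ioo_subset' hL).1
      (hlim.eventually (lt_mem_nhds hc2))
    set M := min ε L / 2 with hMdef
    have hM : 0 < M := half_pos (lt_min hε hL)
    have hML : ∀ r ∈ Ioc 0 M, r ∈ Ioo 0 L ∧ r ∈ Ioo 0 ε := fun r hr => by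
      have h1 := min_le_left ε L
      have h2 := min_le_right ε L
      exact ⟨⟨hr.1, by linarith [hr.2]⟩, ⟨hr.1, by linarith [hr.2]⟩⟩
    have key := eventually_le_of_log_deriv (v := fun r => -(z r / r ^ 2)) (v' := fun r => -v' r)
      (K := -k ^ 2) (δ := 2 * (c - (k - k ^ 2))) hM (by linarith)
      (fun r hr => (hv r (hML r hr).1).fun_neg) (fun r hr hK => by
        obtain ⟨hrL, hrε⟩ := hML r hr
        have h1 : c < F r / r := hεf hrε
        rw [hu r hrL] at hK
        have h3 := hu0 r hrL
        have h4 : √(z r) / r < k := by nlinarith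
        have h5 := hrv r hrL
        nlinarith [hu1 r hrL])
    filter_upwards [key, Ioo_mem_nhdsGT hL] with r hr hrL
    refine ((le_max_left _ _).trans_lt hk1).trans_le ?_
    rw [hu r hrL] at hr
    nlinarith [hu0 r hrL]
  · intro k₀ hk₀
    obtain ⟨k, hk1, hk2⟩ := exists_between (lt_min hk₀ hl1)
    have hk0 : 0 < k := hl0.trans hk1
    have hkh : k < 1 / 2 := hk2.trans_le (min_le_right _ _)
    have hka : -b < k - k ^ 2 := by nlinarith
    obtain ⟨c, hc1, hc2⟩ := exists_between hka
    obtain ⟨ε, hε, hεf⟩ := (mem_nhdsGT_iff_exists_Ioo_subset' hL).1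
      (hlim.eventually (gt_mem_nhds hc1))
    set M := min ε L / 2 with hMdef
    have hM : 0 < M := half_pos (lt_min hε hL)
    have hML : ∀ r ∈ Ioc 0 M, r ∈ Ioo 0 L ∧ r ∈ Ioo 0 ε := fun r hr => by
      have h1 := min_le_left ε L
      have h2 := min_le_right ε L
      exact ⟨⟨hr.1, by linarith [hr.2]⟩, ⟨hr.1, by linarith [hr.2]⟩⟩
    have key := eventually_le_of_log_deriv (v := fun r => z r / r ^ 2) (v' := v')
      (K := k ^ 2) (δ := 2 * ((k - k ^ 2) - c)) hM (by linarith)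
      (fun r hr => hv r (hML r hr).1) (fun r hr hK => by
        obtain ⟨hrL, hrε⟩ := hML r hr
        have h1 : F r / r < c := hεf hrε
        rw [hu r hrL] at hK
        have h3 := hu0 r hrL
        have h4 : k < √(z r) / r := by nlinarith
        have h5 := hrv r hrL
        nlinarith [hu1 r hrL])
    filter_upwards [key, Ioo_mem_nhdsGT hL] with r hr hrL
    refine lt_of_le_of_lt ?_ (hk2.trans_le (min_le_left _ _))
    rw [hu r hrL] at hr
    nlinarith [hu0 r hrL]

/-- The connection from a saddle at `0` to a node at `L`: the solution leaving the saddle along its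
stable direction stays below the line `(L - s) / 2`, hence reaches the node. -/
lemma exists_connection {f : ℝ → ℝ} {L a b : ℝ} (hf : Continuous f) (hL : 0 < L)
    (hf0 : f 0 = 0) (hfL : f L = 0) (hfpos : ∀ s ∈ Ioo 0 L, 0 < f s)
    (hfle : ∀ s ∈ Icc 0 L, f s ≤ (L - s) / 4)
    (ha : 0 < a) (hb : b < 0) (hb4 : -(1 / 4) < b)
    (hfa : HasDerivAt f a 0) (hfb : HasDerivAt f b L) :
    ∃ y : ℝ → ℝ, y 0 = 0 ∧ y L = 0 ∧ (∀ s ∈ Ioo 0 L, 0 < y s) ∧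
      (∀ s ∈ Ioo 0 L, HasDerivAt y (f s / y s - 1) s) ∧
      Tendsto (fun s => y s / s) (𝓝[>] 0) (𝓝 (-slowSlope a)) ∧
      Tendsto (fun r => y (L - r) / r) (𝓝[>] 0) (𝓝 (slowSlope b)) := by
  obtain ⟨z, hz0, hzc, hz⟩ := exists_solution_sq (g := fun s => 2 * f s) (by fun_prop) hL
  have hnn : ∀ s ∈ Icc 0 L, 0 ≤ z s := by
    have := nonpos_of_deriv_nonpos (w := fun s => -z s)
      (w' := fun s => -(2 * f s - 2 * √(z s))) (a := 0) (b := L) hzc.neg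
      (fun s hs => (hz s hs).fun_neg) (by simp [hz0]) (fun s hs hpos => by
        rw [Real.sqrt_eq_zero_of_nonpos (by linarith)]
        have := hfpos s hs
        linarith)
    intro s hs
    have := this s hs
    linarith
  have hpos : ∀ s ∈ Ioo 0 L, 0 < z s := by
    intro s hs
    refine lt_of_le_of_ne (hnn s (Ioo_subset_Icc_self hs)) fun h => ?_
    have hmin : IsLocalMin z s := by
      filter_upwards [Icc_mem_nhds hs.1 hs.2] with u hu
      rw [← h]; exact hnn u hu
    have h1 := hmin.hasDerivAt_eq_zero (hz s hs)
    rw [← h, Real.sqrt_zero] at h1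
    have := hfpos s hs
    linarith
  have hle : ∀ s ∈ Icc 0 L, √(z s) ≤ (L - s) / 2 := by
    have key := nonpos_of_deriv_nonpos (w := fun s => z s - ((L - s) / 2) ^ 2)
      (w' := fun s => (2 * f s - 2 * √(z s)) + (L - s) / 2) (a := 0) (b := L)
      (hzc.sub (by fun_prop))
      (fun s hs => ((hz s hs).fun_sub
        ((((hasDerivAt_id s).const_sub L).div_const 2).fun_pow 2)).congr_deriv (by simp; ring))
      (by simp only [hz0, sub_zero, zero_sub]; nlinarith) (fun s hs hpos => by
        have h1 : (L - s) / 2 < √(z s) := Real.lt_sqrt_of_sq_lt (by linarith)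
        have := hfle s (Ioo_subset_Icc_self hs)
        linarith)
    intro s hs
    have := key s hs
    exact Real.sqrt_le_iff.2 ⟨by linarith [hs.2], by linarith⟩
  refine ⟨fun s => √(z s), by simp [hz0], ?_, fun s hs => Real.sqrt_pos.2 (hpos s hs), ?_,
    tendsto_saddle hL ha hf0 hfa hz0 hzc hz, ?_⟩
  · have := hle L ⟨hL.le, le_rfl⟩
    rw [sub_self, zero_div] at this
    exact le_antisymm this (Real.sqrt_nonneg _)
  · intro s hs
    have h0 := Real.sqrt_pos.2 (hpos s hs)
    refine ((hz s hs).sqrt (hpos s hs).ne').congr_deriv ?_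
    field_simp
  · have hm : ∀ r ∈ Ioo 0 L, L - r ∈ Ioo 0 L := fun r hr =>
      ⟨by linarith [hr.2], by linarith [hr.1]⟩
    refine tendsto_node (F := fun r => f (L - r)) (z := fun r => z (L - r)) hL hb hb4
      (by simpa using hfL) ?_ (fun r hr => hpos _ (hm r hr)) ?_ ?_
    · have h1 : HasDerivAt f b (L - 0) := by simpa using hfb
      exact (h1.comp_const_sub L 0)
    · intro r hr
      have := hle _ (Ioo_subset_Icc_self (hm r hr))
      simpa using this
    · intro r hr
      exact ((hz _ (hm r hr)).comp_const_sub L r).congr_deriv (by ring)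

/-! ### Pieces between consecutive zeros -/

lemma nonneg_of_pos_right {f : ℝ → ℝ} {L a : ℝ} (hL : 0 < L) (hf0 : f 0 = 0)
    (hfa : HasDerivAt f a 0) (hfpos : ∀ s ∈ Ioo 0 L, 0 < f s) : 0 ≤ a := by
  refine ge_of_tendsto (tendsto_div_of_hasDerivAt hfa hf0) ?_
  filter_upwards [Ioo_mem_nhdsGT hL] with s hs
  exact (div_pos (hfpos s hs) hs.1).le

lemma hasDerivWithinAt_Ici_of_tendsto {X : ℝ → ℝ} {p m : ℝ} (h0 : X p = 0)
    (h : Tendsto (fun s => X (p + s) / s) (𝓝[>] 0) (𝓝 m)) :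
    HasDerivWithinAt X m (Ici p) p := by
  rw [hasDerivWithinAt_iff_tendsto_slope, Ici_sdiff_left]
  have hsub : Tendsto (fun t => t - p) (𝓝[>] p) (𝓝[>] 0) := by
    refine tendsto_nhdsWithin_iff.2 ⟨?_, ?_⟩
    · have : Tendsto (fun t => t - p) (𝓝 p) (𝓝 (p - p)) := tendsto_id.sub_const p
      rw [sub_self] at this
      exact this.mono_left nhdsWithin_le_nhds
    · filter_upwards [self_mem_nhdsWithin] with t ht
      exact sub_pos.2 (mem_Ioi.1 ht)
  refine (h.comp hsub).congr fun t => ?_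
  simp [slope_def_field, h0]

lemma hasDerivWithinAt_Iic_of_tendsto {X : ℝ → ℝ} {q m : ℝ} (h0 : X q = 0)
    (h : Tendsto (fun s => X (q - s) / s) (𝓝[>] 0) (𝓝 (-m))) :
    HasDerivWithinAt X m (Iic q) q := by
  rw [hasDerivWithinAt_iff_tendsto_slope, Iic_sdiff_right]
  have hsub : Tendsto (fun t => q - t) (𝓝[<] q) (𝓝[>] 0) := by
    refine tendsto_nhdsWithin_iff.2 ⟨?_, ?_⟩
    · have : Tendsto (fun t => q - t) (𝓝 q) (𝓝 (q - q)) := tendsto_id.const_sub q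
      rw [sub_self] at this
      exact this.mono_left nhdsWithin_le_nhds
    · filter_upwards [self_mem_nhdsWithin] with t ht
      exact sub_pos.2 (mem_Iio.1 ht)
  have h2 := (h.comp hsub).neg
  rw [neg_neg] at h2
  refine h2.congr fun t => ?_
  simp only [Function.comp, sub_sub_cancel, slope_def_field, h0, sub_zero]
  rw [← div_neg, neg_sub]

lemma neg_of_ne_zero {φ : ℝ → ℝ} {p q c t : ℝ} (hφ : Continuous φ)
    (hne : ∀ u ∈ Ioo p q, φ u ≠ 0) (hc : c ∈ Ioo p q) (ht : t ∈ Ioo p q) (h : φ c < 0) :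
    φ t < 0 := by
  by_contra h'
  push Not at h'
  obtain ⟨u, hu, hu0⟩ := isPreconnected_Ioo.intermediate_value hc ht hφ.continuousOn ⟨h.le, h'⟩
  exact hne u hu hu0

lemma exists_adjacent_zeros {φ : ℝ → ℝ} (hφ : Continuous φ) (hlow : ∀ t, ∃ p ≤ t, φ p = 0)
    (hup : ∀ t, ∃ q ≥ t, φ q = 0) {t : ℝ} (ht : φ t ≠ 0) :
    ∃ p q, t ∈ Ioo p q ∧ φ p = 0 ∧ φ q = 0 ∧ ∀ u ∈ Ioo p q, φ u ≠ 0 := by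
  have hcl : IsClosed {u | φ u = 0} := isClosed_eq hφ continuous_const
  obtain ⟨p₀, hp₀, hp₀'⟩ := hlow t
  obtain ⟨q₀, hq₀, hq₀'⟩ := hup t
  have hbp : BddAbove ({u | φ u = 0} ∩ Iic t) := ⟨t, fun u hu => hu.2⟩
  have hbq : BddBelow ({u | φ u = 0} ∩ Ici t) := ⟨t, fun u hu => hu.2⟩
  have hp := (hcl.inter isClosed_Iic).csSup_mem ⟨p₀, hp₀', hp₀⟩ hbp
  have hq := (hcl.inter isClosed_Ici).csInf_mem ⟨q₀, hq₀', hq₀⟩ hbq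
  refine ⟨_, _, ⟨lt_of_le_of_ne hp.2 ?_, lt_of_le_of_ne hq.2 ?_⟩, hp.1, hq.1, ?_⟩
  · intro h
    exact ht (h ▸ hp.1)
  · intro h
    exact ht (h.symm ▸ hq.1)
  · intro u hu hu0
    rcases le_total u t with h | h
    · exact absurd (le_csSup hbp ⟨hu0, h⟩) (not_le.2 hu.1)
    · exact absurd (csInf_le hbq ⟨hu0, h⟩) (not_le.2 hu.2)

lemma Function.Periodic.exists_zero_le_and_ge {φ : ℝ → ℝ} {T c : ℝ} (hT : 0 < T)
    (hφ : Function.Periodic φ T) (hc : φ c = 0) :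
    (∀ t, ∃ p ≤ t, φ p = 0) ∧ (∀ t, ∃ q ≥ t, φ q = 0) := by
  constructor
  · intro t
    obtain ⟨y, hy, h⟩ := hφ.exists_mem_Ico hT c (t - T)
    exact ⟨y, by linarith [hy.2], by rw [← h, hc]⟩
  · intro t
    obtain ⟨y, hy, h⟩ := hφ.exists_mem_Ico hT c t
    exact ⟨y, hy.1, by rw [← h, hc]⟩

/-- The solution over an interval between consecutive zeros of `A`, whose slopes at both ends depend
only on the zero of `A` there, so that neighbouring pieces fit together differentiably. -/
lemma exists_edge {A : ℝ → ℝ} (hA : Differentiable ℝ A)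
    (h4 : ∀ s t, s ≤ t → A s - A t ≤ (t - s) / 4) (hd : ∀ t, -(1 / 4) < deriv A t)
    (hsimple : ∀ t, A t = 0 → deriv A t ≠ 0) {p q : ℝ} (hpq : p < q) (hp : A p = 0)
    (hq : A q = 0) (hne : ∀ t ∈ Ioo p q, A t ≠ 0) :
    ∃ X : ℝ → ℝ, X p = 0 ∧ X q = 0 ∧
      (∀ t ∈ Ioo p q, X t ≠ 0 ∧ HasDerivAt X (1 + A t / X t) t) ∧
      HasDerivWithinAt X (slowSlope (deriv A p)) (Ici p) p ∧
      HasDerivWithinAt X (slowSlope (deriv A q)) (Iic q) q := by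
  have hL : 0 < q - p := sub_pos.2 hpq
  have hmid : (p + q) / 2 ∈ Ioo p q := ⟨by linarith, by linarith⟩
  rcases lt_or_gt_of_ne (hne _ hmid) with hneg | hpos
  · -- `A < 0`: the saddle is `q`, and `s = q - t`
    have hAneg : ∀ t ∈ Ioo p q, A t < 0 := fun t ht =>
      neg_of_ne_zero hA.continuous hne hmid ht hneg
    have hm : ∀ s ∈ Ioo 0 (q - p), q - s ∈ Ioo p q := fun s hs =>
      ⟨by linarith [hs.2], by linarith [hs.1]⟩
    have hder : ∀ s, HasDerivAt (fun s => -A (q - s)) (deriv A (q - s)) s := fun s =>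
      (((hA (q - s)).hasDerivAt.comp_const_sub q s).fun_neg).congr_deriv (by ring)
    have hfa : HasDerivAt (fun s => -A (q - s)) (deriv A q) 0 := by simpa using hder 0
    have hfb : HasDerivAt (fun s => -A (q - s)) (deriv A p) (q - p) := by
      simpa using hder (q - p)
    have hfpos : ∀ s ∈ Ioo 0 (q - p), 0 < -A (q - s) := fun s hs => by
      linarith [hAneg _ (hm s hs)]
    have ha : 0 < deriv A q := lt_of_le_of_ne
      (nonneg_of_pos_right hL (by simp [hq]) hfa hfpos) (hsimple q hq).symm
    have hb : deriv A p < 0 := by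
      refine lt_of_le_of_ne ?_ (hsimple p hp)
      have h1 : HasDerivAt (fun r => -A (p + r)) (-deriv A p) 0 := by
        have : HasDerivAt A (deriv A p) (p + 0) := by simpa using (hA p).hasDerivAt
        exact (this.comp_const_add p 0).fun_neg
      have := nonneg_of_pos_right hL (by simp [hp]) h1 (fun r hr => by
        linarith [hAneg (p + r) ⟨by linarith [hr.1], by linarith [hr.2]⟩])
      linarith
    obtain ⟨y, hy0, hyL, hypos, hyd, hys, hyn⟩ := exists_connection
      (f := fun s => -A (q - s)) (by have := hA.continuous; fun_prop) hL (by simp [hq])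
      (by simp [hp]) hfpos (fun s hs => by
        have := h4 p (q - s) (by linarith [hs.2])
        rw [hp] at this
        linarith) ha hb (hd p) hfa hfb
    refine ⟨fun t => y (q - t), hyL, by simpa using hy0, fun t ht => ?_, ?_, ?_⟩
    · have ht' : q - t ∈ Ioo 0 (q - p) := ⟨by linarith [ht.2], by linarith [ht.1]⟩
      refine ⟨(hypos _ ht').ne', ((hyd _ ht').comp_const_sub q t).congr_deriv ?_⟩
      rw [sub_sub_cancel]; ring
    · refine hasDerivWithinAt_Ici_of_tendsto hyL (hyn.congr fun r => ?_)
      rw [sub_add_eq_sub_sub]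
    · refine hasDerivWithinAt_Iic_of_tendsto (by simpa using hy0) (hys.congr fun r => ?_)
      rw [sub_sub_cancel]
  · -- `A > 0`: the saddle is `p`, and `s = t - p`
    have hApos : ∀ t ∈ Ioo p q, 0 < A t := fun t ht => by
      have := neg_of_ne_zero (φ := fun t => -A t) hA.continuous.neg
        (fun u hu => neg_ne_zero.2 (hne u hu)) hmid ht (by linarith)
      linarith
    have hm : ∀ s ∈ Ioo 0 (q - p), p + s ∈ Ioo p q := fun s hs =>
      ⟨by linarith [hs.1], by linarith [hs.2]⟩
    have hder : ∀ s, HasDerivAt (fun s => A (p + s)) (deriv A (p + s)) s := fun s =>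
      (hA (p + s)).hasDerivAt.comp_const_add p s
    have hfa : HasDerivAt (fun s => A (p + s)) (deriv A p) 0 := by simpa using hder 0
    have hfb : HasDerivAt (fun s => A (p + s)) (deriv A q) (q - p) := by
      simpa using hder (q - p)
    have hfpos : ∀ s ∈ Ioo 0 (q - p), 0 < A (p + s) := fun s hs => hApos _ (hm s hs)
    have ha : 0 < deriv A p := lt_of_le_of_ne
      (nonneg_of_pos_right hL (by simp [hp]) hfa hfpos) (hsimple p hp).symm
    have hb : deriv A q < 0 := by
      refine lt_of_le_of_ne ?_ (hsimple q hq)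
      have h1 : HasDerivAt (fun r => A (q - r)) (-deriv A q) 0 := by
        have : HasDerivAt A (deriv A q) (q - 0) := by simpa using (hA q).hasDerivAt
        exact this.comp_const_sub q 0
      have := nonneg_of_pos_right hL (by simp [hq]) h1 (fun r hr =>
        hApos (q - r) ⟨by linarith [hr.2], by linarith [hr.1]⟩)
      linarith
    obtain ⟨y, hy0, hyL, hypos, hyd, hys, hyn⟩ := exists_connection
      (f := fun s => A (p + s)) (by have := hA.continuous; fun_prop) hL (by simp [hp])
      (by simp [hq]) hfpos (fun s hs => by
        have := h4 (p + s) q (by linarith [hs.2])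
        rw [hq] at this
        linarith) ha hb (hd q) hfa hfb
    refine ⟨fun t => -y (t - p), by simpa using hy0, by simpa using hyL, fun t ht => ?_, ?_, ?_⟩
    · have ht' : t - p ∈ Ioo 0 (q - p) := ⟨by linarith [ht.1], by linarith [ht.2]⟩
      refine ⟨neg_ne_zero.2 (hypos _ ht').ne',
        (((hyd _ ht').comp_sub_const t p).fun_neg).congr_deriv ?_⟩
      rw [add_sub_cancel, div_neg]; ring
    · refine hasDerivWithinAt_Ici_of_tendsto (by simpa using hy0) ?_
      have := hys.neg
      rw [neg_neg] at this
      refine this.congr fun r => ?_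
      rw [add_sub_cancel_left, neg_div]
    · refine hasDerivWithinAt_Iic_of_tendsto (by simpa using hyL) (hyn.neg.congr fun r => ?_)
      rw [sub_right_comm, neg_div]

/-! ### Global solutions -/

/-- `x` is a solution of the normal form equation `x x' = A + x` on `ℝ`. -/
def IsNFSolution (A x : ℝ → ℝ) : Prop :=
  Differentiable ℝ x ∧ ∀ t, x t * deriv x t = A t + x t

/-- The equation is invariant under `(t, x, A) ↦ (-t, -x, -A)`. -/
lemma IsNFSolution.reflect {A x : ℝ → ℝ} (h : IsNFSolution A x) :
    IsNFSolution (fun t => -A (-t)) (fun t => -x (-t)) := by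
  have hd : ∀ t, HasDerivAt (fun t => -x (-t)) (deriv x (-t)) t := fun t => by
    have h1 := ((h.1 (-t)).hasDerivAt.comp t (hasDerivAt_neg t)).fun_neg
    exact h1.congr_deriv (by ring)
  refine ⟨fun t => (hd t).differentiableAt, fun t => ?_⟩
  rw [(hd t).deriv]
  have := h.2 (-t)
  linarith

lemma IsNFSolution.hasDerivAt_sq {A x : ℝ → ℝ} (h : IsNFSolution A x) (t : ℝ) :
    HasDerivAt (fun t => x t ^ 2) (2 * (A t + x t)) t := by
  refine ((h.1 t).hasDerivAt.fun_pow 2).congr_deriv ?_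
  rw [← h.2 t]; simp; ring

/-- Gluing the pieces over all intervals between consecutive zeros of `A`. -/
lemma exists_solution {A : ℝ → ℝ} (hA : Differentiable ℝ A)
    (h4 : ∀ s t, s ≤ t → A s - A t ≤ (t - s) / 4) (hd : ∀ t, -(1 / 4) < deriv A t)
    (hsimple : ∀ t, A t = 0 → deriv A t ≠ 0) (hlow : ∀ t, ∃ p ≤ t, A p = 0)
    (hup : ∀ t, ∃ q ≥ t, A q = 0) :
    ∃ x, IsNFSolution A x ∧ ∀ t, A t = 0 → x t = 0 := by
  classical
  have hadj := fun t => exists_adjacent_zeros hA.continuous hlow hup (t := t)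
  choose! p q hpq hp hq hne using hadj
  have hedge := fun p q h₁ h₂ h₃ h₄ => exists_edge hA h4 hd hsimple (p := p) (q := q) h₁ h₂ h₃ h₄
  choose! X hXp hXq hX hXr hXl using hedge
  set x : ℝ → ℝ := fun t => if A t = 0 then 0 else X (p t) (q t) t with hx
  have hx0 : ∀ t, A t = 0 → x t = 0 := fun t ht => by simp [hx, ht]
  have hxeq : ∀ a b, a < b → A a = 0 → A b = 0 → (∀ u ∈ Ioo a b, A u ≠ 0) →
      ∀ t ∈ Icc a b, x t = X a b t := by
    intro a b hab ha hb hn t ht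
    rcases eq_or_lt_of_le ht.1 with h | h1
    · rw [← h, hx0 a ha, hXp a b hab ha hb hn]
    rcases eq_or_lt_of_le ht.2 with h | h2
    · rw [h, hx0 b hb, hXq a b hab ha hb hn]
    have ht0 : A t ≠ 0 := hn t ⟨h1, h2⟩
    have e := hpq t ht0
    have ep : p t = a := by
      rcases lt_trichotomy (p t) a with h | h | h
      · exact absurd ha (hne t ht0 a ⟨h, h1.trans e.2⟩)
      · exact h
      · exact absurd (hp t ht0) (hn _ ⟨h, e.1.trans h2⟩)
    have eq : q t = b := by
      rcases lt_trichotomy (q t) b with h | h | h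
      · exact absurd (hq t ht0) (hn _ ⟨h1.trans e.2, h⟩)
      · exact h
      · exact absurd hb (hne t ht0 b ⟨e.1.trans h2, h⟩)
    simp [hx, ht0, ep, eq]
  have hzero : ∀ t, A t = 0 → HasDerivAt x (slowSlope (deriv A t)) t := by
    intro t ht
    have hiso : ∀ᶠ u in 𝓝[≠] t, A u ≠ 0 := (hA t).hasDerivAt.eventually_ne (hsimple t ht)
    have hr : ∃ b, t < b ∧ A b = 0 ∧ ∀ u ∈ Ioo t b, A u ≠ 0 := by
      obtain ⟨c, hc, hcn⟩ := (mem_nhdsGT_iff_exists_Ioo_subset' (lt_add_one t)).1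
        (nhdsGT_le_nhdsNE t hiso)
      obtain ⟨m, hm1, hm2⟩ := exists_between (mem_Ioi.1 hc)
      have hm0 : A m ≠ 0 := hcn ⟨hm1, hm2⟩
      have e : p m = t := by
        rcases lt_trichotomy (p m) t with h | h | h
        · exact absurd ht (hne m hm0 t ⟨h, hm1.trans (hpq m hm0).2⟩)
        · exact h
        · exact absurd (hp m hm0) (hcn ⟨h, (hpq m hm0).1.trans hm2⟩)
      exact ⟨q m, hm1.trans (hpq m hm0).2, hq m hm0, e ▸ hne m hm0⟩
    have hl : ∃ b, b < t ∧ A b = 0 ∧ ∀ u ∈ Ioo b t, A u ≠ 0 := by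
      obtain ⟨c, hc, hcn⟩ := (mem_nhdsLT_iff_exists_Ioo_subset' (sub_one_lt t)).1
        (nhdsLT_le_nhdsNE t hiso)
      obtain ⟨m, hm1, hm2⟩ := exists_between (mem_Iio.1 hc)
      have hm0 : A m ≠ 0 := hcn ⟨hm1, hm2⟩
      have e : q m = t := by
        rcases lt_trichotomy (q m) t with h | h | h
        · exact absurd (hq m hm0) (hcn ⟨hm1.trans (hpq m hm0).2, h⟩)
        · exact h
        · exact absurd ht (hne m hm0 t ⟨(hpq m hm0).1.trans hm2, h⟩)
      exact ⟨p m, (hpq m hm0).1.trans hm2, hp m hm0, e ▸ hne m hm0⟩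
    obtain ⟨b, htb, hb, hbn⟩ := hr
    obtain ⟨a, hat, ha, han⟩ := hl
    have h1 : HasDerivWithinAt x (slowSlope (deriv A t)) (Ici t) t := by
      refine (hXr t b htb ht hb hbn).congr_of_eventuallyEq ?_
        (hxeq t b htb ht hb hbn t ⟨le_rfl, htb.le⟩)
      filter_upwards [Icc_mem_nhdsGE htb] with u hu
      exact hxeq t b htb ht hb hbn u hu
    have h2 : HasDerivWithinAt x (slowSlope (deriv A t)) (Iic t) t := by
      refine (hXl a t hat ha ht han).congr_of_eventuallyEq ?_
        (hxeq a t hat ha ht han t ⟨hat.le, le_rfl⟩)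
      filter_upwards [Icc_mem_nhdsLE hat] with u hu
      exact hxeq a t hat ha ht han u hu
    have h3 := h2.union h1
    rwa [Iic_union_Ici, hasDerivWithinAt_univ] at h3
  have hnz : ∀ t, A t ≠ 0 → x t ≠ 0 ∧ HasDerivAt x (1 + A t / x t) t := by
    intro t ht
    have e := hpq t ht
    have hlt := e.1.trans e.2
    have hE := hxeq _ _ hlt (hp t ht) (hq t ht) (hne t ht)
    obtain ⟨h1, h2⟩ := hX _ _ hlt (hp t ht) (hq t ht) (hne t ht) t e
    rw [← hE t (Ioo_subset_Icc_self e)] at h1 h2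
    refine ⟨h1, h2.congr_of_eventuallyEq ?_⟩
    filter_upwards [Icc_mem_nhds e.1 e.2] with u hu
    exact hE u hu
  refine ⟨x, ⟨fun t => ?_, fun t => ?_⟩, hx0⟩
  · by_cases ht : A t = 0
    · exact (hzero t ht).differentiableAt
    · exact (hnz t ht).2.differentiableAt
  · by_cases ht : A t = 0
    · simp [hx0 t ht, ht]
    · rw [(hnz t ht).2.deriv]
      have := (hnz t ht).1
      field_simp
      ring

/-! ### Uniqueness -/

/-- If `A > 0` between two common zeros of two solutions, both are negative there, and the equation
for `x²` is one-sided Lipschitz, so that the solutions agree. -/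
lemma IsNFSolution.eq_of_pos {A x y : ℝ → ℝ} (hx : IsNFSolution A x) (hy : IsNFSolution A y)
    {p q : ℝ} (hApos : ∀ t ∈ Ioo p q, 0 < A t) (hxp : x p = 0) (hxq : x q = 0)
    (hyp : y p = 0) (hyq : y q = 0) : ∀ t ∈ Ioo p q, x t = y t := by
  intro t ht
  have hneg : ∀ x : ℝ → ℝ, IsNFSolution A x → x p = 0 → x q = 0 → ∀ t ∈ Ioo p q, x t < 0 := by
    intro x hx hxp hxq u hu
    have hne : ∀ u ∈ Ioo p q, x u ≠ 0 := fun u hu h0 => by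
      have h1 := hx.2 u
      rw [h0] at h1
      linarith [hApos u hu]
    obtain ⟨c, hc, hc0⟩ := exists_deriv_eq_zero (ht.1.trans ht.2) hx.1.continuous.continuousOn
      (hxp.trans hxq.symm)
    have h1 := hx.2 c
    rw [hc0] at h1
    exact neg_of_ne_zero hx.1.continuous hne hc hu (by linarith [hApos c hc])
  have hle : ∀ x y : ℝ → ℝ, IsNFSolution A x → IsNFSolution A y → x p = 0 → x q = 0 → y p = 0 →
      y q = 0 → x t ^ 2 ≤ y t ^ 2 := by
    intro x y hx hy hxp hxq hyp hyq
    have := nonpos_of_deriv_nonpos (w := fun t => x t ^ 2 - y t ^ 2)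
      (w' := fun t => 2 * (A t + x t) - 2 * (A t + y t)) (a := p) (b := q)
      (by have := hx.1.continuous; have := hy.1.continuous; fun_prop)
      (fun t _ => (hx.hasDerivAt_sq t).fun_sub (hy.hasDerivAt_sq t)) (by simp [hxp, hyp])
      (fun u hu hpos => by
        have h1 := hneg x hx hxp hxq u hu
        have h2 := hneg y hy hyp hyq u hu
        nlinarith) t (Ioo_subset_Icc_self ht)
    linarith
  have h1 := hneg x hx hxp hxq t ht
  have h2 := hneg y hy hyp hyq t ht
  have h3 := le_antisymm (hle x y hx hy hxp hxq hyp hyq) (hle y x hy hx hyp hyq hxp hxq)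
  nlinarith

lemma IsNFSolution.eq_of_vanish {A x y : ℝ → ℝ} (hA : Continuous A) (hx : IsNFSolution A x)
    (hy : IsNFSolution A y) (hlow : ∀ t, ∃ p ≤ t, A p = 0) (hup : ∀ t, ∃ q ≥ t, A q = 0)
    (hx0 : ∀ t, A t = 0 → x t = 0) (hy0 : ∀ t, A t = 0 → y t = 0) : x = y := by
  funext t
  by_cases ht : A t = 0
  · rw [hx0 t ht, hy0 t ht]
  obtain ⟨p, q, htpq, hp, hq, hne⟩ := exists_adjacent_zeros hA hlow hup ht
  rcases lt_or_gt_of_ne ht with hneg | hpos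
  · have := hx.reflect.eq_of_pos hy.reflect (p := -q) (q := -p)
      (fun u hu => by
        have := neg_of_ne_zero hA hne htpq (t := -u)
          ⟨by linarith [hu.2], by linarith [hu.1]⟩ hneg
        linarith) (by simp [hx0 q hq]) (by simp [hx0 p hp]) (by simp [hy0 q hq])
      (by simp [hy0 p hp]) (-t) ⟨by linarith [htpq.2], by linarith [htpq.1]⟩
    simpa using this
  · refine hx.eq_of_pos hy (fun u hu => ?_) (hx0 p hp) (hx0 q hq) (hy0 p hp) (hy0 q hq) t htpq
    have := neg_of_ne_zero (φ := fun t => -A t) hA.neg (fun u hu => neg_ne_zero.2 (hne u hu))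
      htpq hu (by linarith)
    linarith

/-- A solution that is negative to the right of one of its zeros lies above the line
`-(n - t) / 2` up to any zero `n` of `A`, so that it cannot be negative at `n`. -/
lemma IsNFSolution.not_neg {A x : ℝ → ℝ} (hx : IsNFSolution A x)
    (h4 : ∀ s t, s ≤ t → A s - A t ≤ (t - s) / 4) (hlow : ∀ t, ∃ p ≤ t, x p = 0)
    (hup : ∀ t, ∃ q ≥ t, x q = 0) {n : ℝ} (hn : A n = 0) : ¬ x n < 0 := by
  intro hneg
  obtain ⟨α, β, hαβ, hα, -, hne⟩ := exists_adjacent_zeros hx.1.continuous hlow hup hneg.ne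
  have key := nonpos_of_deriv_nonpos (w := fun t => x t ^ 2 - ((n - t) / 2) ^ 2)
    (w' := fun t => 2 * (A t + x t) + (n - t) / 2) (a := α) (b := n)
    (by have := hx.1.continuous; fun_prop)
    (fun t _ => ((hx.hasDerivAt_sq t).fun_sub
      ((((hasDerivAt_id t).const_sub n).div_const 2).fun_pow 2)).congr_deriv (by simp; ring))
    (by simp only [hα]; nlinarith [sq_nonneg ((n - α) / 2)])
    (fun t ht hpos => by
      have h1 := neg_of_ne_zero hx.1.continuous hne hαβ (t := t)
        ⟨ht.1, ht.2.trans hαβ.2⟩ hneg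
      have h2 := h4 t n ht.2.le
      rw [hn] at h2
      have h3 : (n - t) / 2 < -x t := by nlinarith [ht.2]
      linarith) n ⟨hαβ.1.le, le_rfl⟩
  simp only [sub_self, zero_div] at key
  nlinarith

lemma IsNFSolution.vanish {A x : ℝ → ℝ} (hx : IsNFSolution A x)
    (h4 : ∀ s t, s ≤ t → A s - A t ≤ (t - s) / 4) (hlow : ∀ t, ∃ p ≤ t, x p = 0)
    (hup : ∀ t, ∃ q ≥ t, x q = 0) {n : ℝ} (hn : A n = 0) : x n = 0 := by
  refine le_antisymm (not_lt.1 fun hpos => ?_) (not_lt.1 (hx.not_neg h4 hlow hup hn))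
  refine hx.reflect.not_neg (n := -n) (fun s t hst => ?_) (fun t => ?_) (fun t => ?_)
    (by simp [hn]) (by simpa using hpos)
  · have := h4 (-t) (-s) (by linarith)
    linarith
  · obtain ⟨q, hq, hq0⟩ := hup (-t)
    exact ⟨-q, by linarith, by simp [hq0]⟩
  · obtain ⟨q, hq, hq0⟩ := hlow (-t)
    exact ⟨-q, by linarith, by simp [hq0]⟩

/-- A periodic solution has a zero: `x` is the derivative of `x² / 2 - ∫ A`, which takes the same
value at `0` and `T`. -/
lemma IsNFSolution.exists_zero {A x : ℝ → ℝ} {T : ℝ} (hT : 0 < T) (hA : Continuous A)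
    (hx : IsNFSolution A x) (hper : Function.Periodic x T) (hint : ∫ t in (0 : ℝ)..T, A t = 0) :
    ∃ c, x c = 0 := by
  have hd : ∀ t, HasDerivAt (fun t => x t ^ 2 / 2 - ∫ u in (0 : ℝ)..t, A u) (x t) t := fun t =>
    (((hx.hasDerivAt_sq t).div_const 2).fun_sub
      (hA.integral_hasStrictDerivAt 0 t).hasDerivAt).congr_deriv (by ring)
  obtain ⟨c, -, hc⟩ := exists_hasDerivAt_eq_zero (f' := x) hT
    (fun t _ => (hd t).continuousAt.continuousWithinAt) (by
      have := hper 0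
      rw [zero_add] at this
      simp [hint, this]) (fun t _ => hd t)
  exact ⟨c, hc⟩

/-- if A is C¹, T-periodic, has a zero in [0,T], min A′ > −1/4, all zeros of A
are simple, and ∫₀ᵀ A = 0, then (NF): x·x′ = A(t) + x has exactly one T-periodic solution. -/
theorem normal_form_unique_periodic_solution
    (T : ℝ) (hT : 0 < T) (A : ℝ → ℝ) (hA : ContDiff ℝ 1 A)
    (hAper : Function.Periodic A T)
    (hzero : ∃ t ∈ Icc (0 : ℝ) T, A t = 0)
    (hmin : sInf ((fun t => deriv A t) '' Icc (0 : ℝ) T) > -(1 / 4))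
    (hsimple : ∀ t : ℝ, A t = 0 → deriv A t ≠ 0)
    (hint : ∫ t in (0 : ℝ)..T, A t = 0) :
    ∃! x : ℝ → ℝ, Differentiable ℝ x ∧ Function.Periodic x T ∧
      (∀ t : ℝ, x t * deriv x t = A t + x t) := by
  have hAd : Differentiable ℝ A := hA.differentiable one_ne_zero
  have hd : ∀ t, -(1 / 4) < deriv A t := by
    intro t
    have hdper : Function.Periodic (deriv A) T := fun t => by
      rw [← deriv_comp_add_const]
      congr 1
      exact funext hAper
    obtain ⟨u, hu, e⟩ := hdper.exists_mem_Ico₀ hT t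
    rw [e]
    refine lt_of_lt_of_le hmin (csInf_le ?_ ⟨u, Ico_subset_Icc_self hu, rfl⟩)
    exact (isCompact_Icc.image hA.continuous_deriv_one).bddBelow
  have h4 : ∀ s t, s ≤ t → A s - A t ≤ (t - s) / 4 := by
    intro s t hst
    have hmono : Monotone (fun t => A t + t / 4) := by
      have hD : ∀ t, HasDerivAt (fun t => A t + t / 4) (deriv A t + 1 / 4) t := fun t =>
        (hAd t).hasDerivAt.fun_add ((hasDerivAt_id t).div_const 4)
      refine monotone_of_deriv_nonneg (fun t => (hD t).differentiableAt) fun t => ?_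
      rw [(hD t).deriv]
      linarith [hd t]
    have := hmono hst
    simp only at this
    linarith
  obtain ⟨t₀, -, ht₀⟩ := hzero
  obtain ⟨hlow, hup⟩ := hAper.exists_zero_le_and_ge hT ht₀
  obtain ⟨x, hx, hx0⟩ := exists_solution hAd h4 hd hsimple hlow hup
  refine ⟨x, ⟨hx.1, ?_, hx.2⟩, ?_⟩
  · -- the translate by `T` is also a solution vanishing at the zeros of `A`
    have hxT : IsNFSolution A (fun t => x (t + T)) := by
      refine ⟨hx.1.comp (differentiable_id.add_const T), fun t => ?_⟩
      rw [deriv_comp_add_const, hx.2, hAper t]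
    have := hxT.eq_of_vanish hAd.continuous hx hlow hup
      (fun t ht => hx0 _ (by rw [hAper t, ht])) hx0
    exact fun t => congrFun this t
  · rintro y ⟨hyd, hyper, hyeq⟩
    have hy : IsNFSolution A y := ⟨hyd, hyeq⟩
    obtain ⟨c, hc⟩ := hy.exists_zero hT hAd.continuous hyper hint
    obtain ⟨hylow, hyup⟩ := hyper.exists_zero_le_and_ge hT hc
    exact hy.eq_of_vanish hAd.continuous hx hlow hup (fun t ht => hy.vanish h4 hylow hyup ht) hx0
end

section
/- Let A: ℝ → ℝ be C¹ and let tᵢ ∈ ℝ satisfy A(tᵢ) = 0 and A′(tᵢ) < −1/4. Then there is no C¹ function x defined on an open interval containing tᵢ that solves the normal form equation (NF) and satisfies x(tᵢ) = 0. -/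
/-!
Let `c = x′(tᵢ)`. Dividing (NF) by `t - tᵢ` and letting `t → tᵢ`, where `x` and `A` vanish and `x′`
is continuous, gives `c² = A′(tᵢ) + c`. This quadratic in `c` has discriminant `1 + 4 A′(tᵢ) < 0`,
so no real `c` exists.
-/

open Set Filter Topology

/-- if A(tᵢ) = 0 and A′(tᵢ) < −1/4, then no C¹ function defined on an open
interval containing tᵢ solves (NF): x·x′ = A(t) + x and vanishes at tᵢ.
This shows the condition min A′ > −1/4 is sharp. -/
theorem normal_form_condition_sharp
    (A : ℝ → ℝ) (hA : ContDiff ℝ 1 A) (ti : ℝ)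
    (hAti : A ti = 0) (hA' : deriv A ti < -(1 / 4)) :
    ¬ ∃ (a b : ℝ) (x : ℝ → ℝ), a < ti ∧ ti < b ∧
      ContDiffOn ℝ 1 x (Ioo a b) ∧
      (∀ t ∈ Ioo a b, x t * deriv x t = A t + x t) ∧
      x ti = 0 := by
  rintro ⟨a, b, x, ha, hb, hx, heq, hx0⟩
  have hmem : Ioo a b ∈ 𝓝 ti := Ioo_mem_nhds ha hb
  have hxd : HasDerivAt x (deriv x ti) ti :=
    ((hx.differentiableOn one_ne_zero).differentiableAt hmem).hasDerivAt
  have hAd : HasDerivAt A (deriv A ti) ti :=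
    ((hA.differentiable one_ne_zero) ti).hasDerivAt
  have hcont : ContinuousAt (deriv x) ti :=
    (hx.continuousOn_deriv_of_isOpen isOpen_Ioo le_rfl).continuousAt hmem
  have hsx := hasDerivAt_iff_tendsto_slope.mp hxd
  have hsA := hasDerivAt_iff_tendsto_slope.mp hAd
  have hl := hsx.mul (hcont.tendsto.mono_left (nhdsWithin_le_nhds (s := {ti}ᶜ)))
  have hr := hsA.add hsx
  -- Since `x` and `A` vanish at `ti`, this is (NF) divided by `t - ti`.
  have hev : (fun t => slope x ti t * deriv x t) =ᶠ[𝓝[≠] ti]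
      fun t => slope A ti t + slope x ti t := by
    filter_upwards [nhdsWithin_le_nhds hmem] with t ht
    simp only [slope_def_field, hx0, hAti, sub_zero]
    rw [div_mul_eq_mul_div, heq t ht, add_div]
  have key := tendsto_nhds_unique (hl.congr' hev) hr
  nlinarith [sq_nonneg (deriv x ti - 1 / 2)]
end
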